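/- arXiv:2001.02753 — 5 statements merged into one kernel-verified Lean document; each statement's English description precedes it below -/
import Mathlib

section
/- Let A : ℝ² → ℝ^{n×n} be a continuously twice differentiable family of real symmetric matrices whose two smallest eigenvalues satisfy λ₁(α) = λ₂(α) < λ₃(α) at a point α ∈ ℝ², and suppose α is a non-degenerate conical point, i.e. the 2×2 matrix J_α(A^α) (the Jacobian at α of the map r ↦ (⟨v₁, A(r)v₁⟩ − ⟨v₂, A(r)v₂⟩, 2⟨v₁, A(r)v₂⟩) computed in an orthonormal eigenvector basis v₁, v₂ of A(α)) is invertible. Then there exist an open neighborhood Ω ⊂ ℝ² of α and a constant C > 0 such that for every rᵢ ∈ Ω, the point r_{i+1} = rᵢ − J_{rᵢ}(A^{rᵢ})⁻¹ · (λ₁(rᵢ) − λ₂(rᵢ), 0)ᵀ, where J_{rᵢ}(A^{rᵢ}) is the 2×2 matrix with first row (⟨v₁,∂ₓA v₁⟩ − ⟨v₂,∂ₓA v₂⟩, ⟨v₁,∂_y A v₁⟩ − ⟨v₂,∂_y A v₂⟩) and second row (2⟨v₁,∂ₓA v₂⟩, 2⟨v₁,∂_y A v₂⟩) with v₁, v₂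 orthonormal eigenvectors of A(rᵢ) for λ₁(rᵢ), λ₂(rᵢ) and the partial derivatives of A evaluated at rᵢ, satisfies |r_{i+1} − α| ≤ C |rᵢ − α|². -/
noncomputable section
open Matrix

/-- Partial derivative in the `x` direction. -/
def pdx {E : Type*} [NormedAddCommGroup E] [NormedSpace ℝ E] (f : ℝ × ℝ → E) (r : ℝ × ℝ) : E :=
  fderiv ℝ f r (1, 0)

/-- Partial derivative in the `y` direction. -/
def pdy {E : Type*} [NormedAddCommGroup E] [NormedSpace ℝ E] (f : ℝ × ℝ → E) (r : ℝ × ℝ) : E :=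
  fderiv ℝ f r (0, 1)

/-- The target function `F(S) = (S₁₁ − S₂₂, 2 S₁₂)` of a 2×2 matrix family. -/
def Ftar (S : ℝ × ℝ → Matrix (Fin 2) (Fin 2) ℝ) (r : ℝ × ℝ) : ℝ × ℝ :=
  (S r 0 0 - S r 1 1, 2 * S r 0 1)

/-- The Jacobian `J_r(S) = D_r F(S)` of the target function. -/
def Jmat (S : ℝ × ℝ → Matrix (Fin 2) (Fin 2) ℝ) (r : ℝ × ℝ) : Matrix (Fin 2) (Fin 2) ℝ :=
  !![pdx (fun p => S p 0 0 - S p 1 1) r, pdy (fun p => S p 0 0 - S p 1 1) r;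
     pdx (fun p => 2 * S p 0 1) r, pdy (fun p => 2 * S p 0 1) r]

/-- Action of a 2×2 matrix on `ℝ × ℝ`. -/
def mulVec2 (M : Matrix (Fin 2) (Fin 2) ℝ) (v : ℝ × ℝ) : ℝ × ℝ :=
  (M 0 0 * v.1 + M 0 1 * v.2, M 1 0 * v.1 + M 1 1 * v.2)

/-- The family `A` expressed in the constant basis `v₁, v₂`:
the 2×2 matrix `Ã(r) = (⟨vᵢ, A(r) vⱼ⟩)`. -/
def tildeA {n : ℕ} (A : ℝ × ℝ → Matrix (Fin n) (Fin n) ℝ) (v₁ v₂ : Fin n → ℝ) :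
    ℝ × ℝ → Matrix (Fin 2) (Fin 2) ℝ := fun r =>
  !![v₁ ⬝ᵥ (A r).mulVec v₁, v₁ ⬝ᵥ (A r).mulVec v₂;
     v₂ ⬝ᵥ (A r).mulVec v₁, v₂ ⬝ᵥ (A r).mulVec v₂]

/-- The discriminant of a 2×2 symmetric matrix family. -/
def discB (B : ℝ × ℝ → Matrix (Fin 2) (Fin 2) ℝ) (r : ℝ × ℝ) : ℝ :=
  (B r 0 0 - B r 1 1) ^ 2 + 4 * (B r 0 1) ^ 2

/-- The Hessian (matrix of second partial derivatives) of `g : ℝ² → ℝ`. -/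
def Hess2 (g : ℝ × ℝ → ℝ) (α : ℝ × ℝ) : Matrix (Fin 2) (Fin 2) ℝ :=
  !![pdx (fun r => pdx g r) α, pdx (fun r => pdy g r) α;
     pdy (fun r => pdx g r) α, pdy (fun r => pdy g r) α]

/-- The upper-left 2×2 block of an `n×n` matrix family (`2 < n`). -/
def topBlock {n : ℕ} (hn : 2 < n) (C : ℝ × ℝ → Matrix (Fin n) (Fin n) ℝ) :
    ℝ × ℝ → Matrix (Fin 2) (Fin 2) ℝ := fun r =>
  !![C r ⟨0, by omega⟩ ⟨0, by omega⟩, C r ⟨0, by omega⟩ ⟨1, by omega⟩;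
     C r ⟨1, by omega⟩ ⟨0, by omega⟩, C r ⟨1, by omega⟩ ⟨1, by omega⟩]

/-- The entrywise derivative of a matrix family in the direction `h`. -/
def entryDeriv {n : ℕ} (A : ℝ × ℝ → Matrix (Fin n) (Fin n) ℝ) (r h : ℝ × ℝ) :
    Matrix (Fin n) (Fin n) ℝ :=
  Matrix.of fun i j => fderiv ℝ (fun p => A p i j) r h

/-- The Jacobian of the target map in terms of the partial derivatives `X`, `Y` of the family. -/
def targetJac {n : ℕ} (X Y : Matrix (Fin n) (Fin n) ℝ) (v₁ v₂ : Fin n → ℝ) :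
    Matrix (Fin 2) (Fin 2) ℝ :=
  !![v₁ ⬝ᵥ X *ᵥ v₁ - v₂ ⬝ᵥ X *ᵥ v₂, v₁ ⬝ᵥ Y *ᵥ v₁ - v₂ ⬝ᵥ Y *ᵥ v₂;
     2 * (v₁ ⬝ᵥ X *ᵥ v₂), 2 * (v₁ ⬝ᵥ Y *ᵥ v₂)]

section Bilinear

variable {n : ℕ}

lemma dotProduct_mulVec_eq_sum (M : Matrix (Fin n) (Fin n) ℝ) (u v : Fin n → ℝ) :
    u ⬝ᵥ M *ᵥ v = ∑ i, ∑ j, u i * v j * M i j := by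
  simp only [dotProduct, mulVec, Finset.mul_sum]
  exact Finset.sum_congr rfl fun i _ => Finset.sum_congr rfl fun j _ => by ring

lemma abs_dotProduct_mulVec_le {M : Matrix (Fin n) (Fin n) ℝ} {u v : Fin n → ℝ} {ε : ℝ}
    (hu : ∀ i, |u i| ≤ 1) (hv : ∀ i, |v i| ≤ 1) (hM : ∀ i j, |M i j| ≤ ε) :
    |u ⬝ᵥ M *ᵥ v| ≤ n ^ 2 * ε := by
  rw [dotProduct_mulVec_eq_sum]
  calc |∑ i, ∑ j, u i * v j * M i j| ≤ ∑ i, ∑ j, |u i * v j * M i j| :=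
        (Finset.abs_sum_le_sum_abs _ _).trans
          (Finset.sum_le_sum fun i _ => Finset.abs_sum_le_sum_abs _ _)
    _ ≤ ∑ _i : Fin n, ∑ _j : Fin n, ε := by
        refine Finset.sum_le_sum fun i _ => Finset.sum_le_sum fun j _ => ?_
        rw [abs_mul, abs_mul]
        have := mul_le_one₀ (hu i) (abs_nonneg _) (hv j)
        nlinarith [hM i j, abs_nonneg (M i j)]
    _ = n ^ 2 * ε := by simp; ring

lemma abs_le_one_of_dotProduct_self {v : Fin n → ℝ} (hv : v ⬝ᵥ v = 1) (i : Fin n) :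
    |v i| ≤ 1 := by
  have h : v i * v i ≤ v ⬝ᵥ v :=
    Finset.single_le_sum (f := fun i => v i * v i) (fun j _ => mul_self_nonneg (v j))
      (Finset.mem_univ i)
  rw [hv] at h
  exact abs_le_one_iff_mul_self_le_one.mpr h

lemma dotProduct_mulVec_comm_of_symm {M : Matrix (Fin n) (Fin n) ℝ} (hM : Mᵀ = M)
    (u v : Fin n → ℝ) : u ⬝ᵥ M *ᵥ v = v ⬝ᵥ M *ᵥ u := by
  rw [dotProduct_mulVec, ← mulVec_transpose, hM, dotProduct_comm]

/-- Changing the orthonormal basis of the plane changes the Jacobian determinant by a sign. -/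
lemma abs_det_targetJac_eq {X Y : Matrix (Fin n) (Fin n) ℝ} (hX : Xᵀ = X) (hY : Yᵀ = Y)
    {u₁ u₂ : Fin n → ℝ} {a b c d : ℝ} (h₁ : a * a + b * b = 1) (h₂ : c * c + d * d = 1)
    (h₁₂ : a * c + b * d = 0) :
    |(targetJac X Y (a • u₁ + b • u₂) (c • u₁ + d • u₂)).det| = |(targetJac X Y u₁ u₂).det| := by
  obtain ⟨e, he⟩ : ∃ e, e = a * d - b * c := ⟨_, rfl⟩
  have hc : c = -e * b := by rw [he]; linear_combination -c * h₁ + a * h₁₂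
  have hd : d = e * a := by rw [he]; linear_combination -d * h₁ + b * h₁₂
  have hs : e = 1 ∨ e = -1 := by
    rw [← sq_eq_one_iff, he]
    linear_combination h₁ * (c * c + d * d) + h₂ - (a * c + b * d) * h₁₂
  have hX' := dotProduct_mulVec_comm_of_symm hX u₂ u₁
  have hY' := dotProduct_mulVec_comm_of_symm hY u₂ u₁
  have key : (targetJac X Y (a • u₁ + b • u₂) (c • u₁ + d • u₂)).det
      = e * (targetJac X Y u₁ u₂).det := by
    subst hc hd
    simp only [targetJac, det_fin_two_of, mulVec_add, mulVec_smul, add_dotProduct, dotProduct_add,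
      smul_dotProduct, dotProduct_smul, smul_eq_mul, hX', hY']
    generalize u₁ ⬝ᵥ X *ᵥ u₁ = x₁₁, u₁ ⬝ᵥ X *ᵥ u₂ = x₁₂, u₂ ⬝ᵥ X *ᵥ u₂ = x₂₂,
      u₁ ⬝ᵥ Y *ᵥ u₁ = y₁₁, u₁ ⬝ᵥ Y *ᵥ u₂ = y₁₂, u₂ ⬝ᵥ Y *ᵥ u₂ = y₂₂
    rcases hs with rfl | rfl
    · linear_combination (a * a + b * b + 1) *
        ((x₁₁ - x₂₂) * (2 * y₁₂) - (y₁₁ - y₂₂) * (2 * x₁₂)) * h₁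
    · linear_combination -(a * a + b * b + 1) *
        ((x₁₁ - x₂₂) * (2 * y₁₂) - (y₁₁ - y₂₂) * (2 * x₁₂)) * h₁
  rw [key, abs_mul]
  rcases hs with rfl | rfl <;> simp

end Bilinear

section Spectral

variable {n : ℕ} {V M : Matrix (Fin n) (Fin n) ℝ} {l : Fin n → ℝ}

lemma dotProduct_mulVec_transpose (hV : Vᵀ * V = 1) (u v : Fin n → ℝ) :
    (Vᵀ *ᵥ u) ⬝ᵥ (Vᵀ *ᵥ v) = u ⬝ᵥ v := by
  rw [dotProduct_mulVec, vecMul_transpose, mulVec_mulVec, mul_eq_one_comm.mp hV, one_mulVec]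

lemma dotProduct_mulVec_of_diagonalization (hM : M = V * diagonal l * Vᵀ) (u v : Fin n → ℝ) :
    u ⬝ᵥ M *ᵥ v = ∑ k, l k * ((Vᵀ *ᵥ u) k * (Vᵀ *ᵥ v) k) := by
  rw [hM, ← mulVec_mulVec, ← mulVec_mulVec, dotProduct_mulVec, ← mulVec_transpose]
  simp only [dotProduct, mulVec_diagonal]
  exact Finset.sum_congr rfl fun k _ => by ring

lemma transpose_mulVec_of_diagonalization (hV : Vᵀ * V = 1) (hM : M = V * diagonal l * Vᵀ)
    (v : Fin n → ℝ) (k : Fin n) : (Vᵀ *ᵥ M *ᵥ v) k = l k * (Vᵀ *ᵥ v) k := by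
  rw [hM, ← mulVec_mulVec, ← mulVec_mulVec, mulVec_mulVec, hV, one_mulVec, mulVec_diagonal]

lemma exists_unit_orthogonal (a b : ℝ) : ∃ s t : ℝ, s * s + t * t = 1 ∧ s * a + t * b = 0 := by
  by_cases h : a * a + b * b = 0
  · refine ⟨1, 0, by norm_num, ?_⟩
    have : a = 0 := by nlinarith [mul_self_nonneg a, mul_self_nonneg b]
    simp [this]
  · have hp : 0 < a * a + b * b := lt_of_le_of_ne
      (add_nonneg (mul_self_nonneg a) (mul_self_nonneg b)) (Ne.symm h)
    have hs := Real.mul_self_sqrt hp.le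
    have hne : √(a * a + b * b) ≠ 0 := (Real.sqrt_pos.mpr hp).ne'
    refine ⟨b / √(a * a + b * b), -a / √(a * a + b * b), ?_, ?_⟩
    · rw [div_mul_div_comm, div_mul_div_comm, hs, ← add_div, div_eq_one_iff_eq hp.ne']
      ring
    · field_simp
      ring

/-- The part of the min-max principle bounding the second eigenvalue from above. -/
lemma second_eigenvalue_le (hn : 2 < n) (hV : Vᵀ * V = 1) (hM : M = V * diagonal l * Vᵀ)
    (hl : Monotone l) {u₁ u₂ : Fin n → ℝ} (h₁ : u₁ ⬝ᵥ u₁ = 1) (h₂ : u₂ ⬝ᵥ u₂ = 1)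
    (h₁₂ : u₁ ⬝ᵥ u₂ = 0) {c : ℝ}
    (hc : ∀ s t : ℝ, s * s + t * t = 1 →
      (s • u₁ + t • u₂) ⬝ᵥ M *ᵥ (s • u₁ + t • u₂) ≤ c) :
    l ⟨1, by omega⟩ ≤ c := by
  obtain ⟨s, t, hst, h0⟩ := exists_unit_orthogonal
    ((Vᵀ *ᵥ u₁) ⟨0, by omega⟩) ((Vᵀ *ᵥ u₂) ⟨0, by omega⟩)
  set x := s • u₁ + t • u₂ with hx
  have hxx : x ⬝ᵥ x = 1 := by
    have h₂₁ : u₂ ⬝ᵥ u₁ = 0 := by rw [dotProduct_comm, h₁₂]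
    simp only [hx, add_dotProduct, dotProduct_add, smul_dotProduct, dotProduct_smul, smul_eq_mul,
      h₁, h₂, h₁₂, h₂₁]
    linarith
  have hx0 : (Vᵀ *ᵥ x) ⟨0, by omega⟩ = 0 := by
    rw [hx, mulVec_add, mulVec_smul, mulVec_smul]
    simpa using h0
  refine le_trans ?_ (hc s t hst)
  rw [← hx, dotProduct_mulVec_of_diagonalization hM]
  calc l ⟨1, by omega⟩ = ∑ k, l ⟨1, by omega⟩ * ((Vᵀ *ᵥ x) k * (Vᵀ *ᵥ x) k) := by
        rw [← Finset.mul_sum]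
        change _ = _ * ((Vᵀ *ᵥ x) ⬝ᵥ (Vᵀ *ᵥ x))
        rw [dotProduct_mulVec_transpose hV, hxx, mul_one]
    _ ≤ _ := by
        refine Finset.sum_le_sum fun k _ => ?_
        by_cases hk : k = ⟨0, by omega⟩
        · rw [hk, hx0]; simp
        · refine mul_le_mul_of_nonneg_right (hl ?_) (mul_self_nonneg _)
          have : (k : ℕ) ≠ 0 := fun h => hk (Fin.ext h)
          exact Fin.mk_le_of_le_val (by omega)

lemma sum_eq_add_of_tail_zero (hn : 2 < n) {f : Fin n → ℝ}
    (hf : ∀ k : Fin n, 2 ≤ (k : ℕ) → f k = 0) :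
    ∑ k, f k = f ⟨0, by omega⟩ + f ⟨1, by omega⟩ := by
  refine Fintype.sum_eq_add _ _ (by simp) fun k hk => hf k ?_
  have h₀ : (k : ℕ) ≠ 0 := fun h => hk.1 (Fin.ext h)
  have h₁ : (k : ℕ) ≠ 1 := fun h => hk.2 (Fin.ext h)
  omega

/-- A vector whose coordinates vanish from index `2` on lies in the plane of the first two columns. -/
lemma eq_smul_col_add_smul_col (hn : 2 < n) (hV : Vᵀ * V = 1) {x : Fin n → ℝ}
    (hx : ∀ k : Fin n, 2 ≤ (k : ℕ) → (Vᵀ *ᵥ x) k = 0) :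
    x = (Vᵀ *ᵥ x) ⟨0, by omega⟩ • V.col ⟨0, by omega⟩
      + (Vᵀ *ᵥ x) ⟨1, by omega⟩ • V.col ⟨1, by omega⟩ := by
  have h : V *ᵥ (Vᵀ *ᵥ x) = x := by
    rw [mulVec_mulVec, mul_eq_one_comm.mp hV, one_mulVec]
  ext i
  have hi : ∑ k, V i k * (Vᵀ *ᵥ x) k = x i := congrFun h i
  rw [← hi, sum_eq_add_of_tail_zero hn fun k hk => by rw [hx k hk, mul_zero]]
  simp [mul_comm]

lemma dotProduct_eq_of_tail_zero (hn : 2 < n) (hV : Vᵀ * V = 1) {x : Fin n → ℝ}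
    (hx : ∀ k : Fin n, 2 ≤ (k : ℕ) → (Vᵀ *ᵥ x) k = 0) (y : Fin n → ℝ) :
    (Vᵀ *ᵥ x) ⟨0, by omega⟩ * (Vᵀ *ᵥ y) ⟨0, by omega⟩
      + (Vᵀ *ᵥ x) ⟨1, by omega⟩ * (Vᵀ *ᵥ y) ⟨1, by omega⟩ = x ⬝ᵥ y := by
  rw [← dotProduct_mulVec_transpose hV, dotProduct,
    sum_eq_add_of_tail_zero hn fun k hk => by rw [hx k hk, zero_mul]]

/-- Two orthonormal bases of the plane of the first two columns have the same Jacobian determinant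
up to sign. -/
lemma abs_det_targetJac_eq_col (hn : 2 < n) (hV : Vᵀ * V = 1) {X Y : Matrix (Fin n) (Fin n) ℝ}
    (hX : Xᵀ = X) (hY : Yᵀ = Y) {v₁ v₂ : Fin n → ℝ}
    (h₁ : v₁ ⬝ᵥ v₁ = 1) (h₂ : v₂ ⬝ᵥ v₂ = 1) (h₁₂ : v₁ ⬝ᵥ v₂ = 0)
    (ht₁ : ∀ k : Fin n, 2 ≤ (k : ℕ) → (Vᵀ *ᵥ v₁) k = 0)
    (ht₂ : ∀ k : Fin n, 2 ≤ (k : ℕ) → (Vᵀ *ᵥ v₂) k = 0) :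
    |(targetJac X Y v₁ v₂).det|
      = |(targetJac X Y (V.col ⟨0, by omega⟩) (V.col ⟨1, by omega⟩)).det| := by
  conv_lhs => rw [eq_smul_col_add_smul_col hn hV ht₁, eq_smul_col_add_smul_col hn hV ht₂]
  exact abs_det_targetJac_eq hX hY
    (by rw [dotProduct_eq_of_tail_zero hn hV ht₁, h₁])
    (by rw [dotProduct_eq_of_tail_zero hn hV ht₂, h₂])
    (by rw [dotProduct_eq_of_tail_zero hn hV ht₁, h₁₂])

/-- Approximate invariance: coordinates of an eigenvector of a perturbed matrix `M'` along
eigenvectors of `M` with separated eigenvalue are small. -/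
lemma abs_transpose_mulVec_le {M' : Matrix (Fin n) (Fin n) ℝ} (hV : Vᵀ * V = 1)
    (hM : M = V * diagonal l * Vᵀ) {v : Fin n → ℝ} {μ ε g : ℝ} (hg : 0 < g)
    (hv : M' *ᵥ v = μ • v) (hvn : v ⬝ᵥ v = 1) (hε : ∀ i j, |M' i j - M i j| ≤ ε)
    {k : Fin n} (hk : μ + g ≤ l k) : |(Vᵀ *ᵥ v) k| ≤ n ^ 2 * ε / g := by
  have hcol : V.col k ⬝ᵥ V.col k = 1 := by
    have := congrFun (congrFun hV k) k
    simpa [mul_apply, dotProduct] using this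
  have hb : |V.col k ⬝ᵥ (M' - M) *ᵥ v| ≤ n ^ 2 * ε :=
    abs_dotProduct_mulVec_le (abs_le_one_of_dotProduct_self hcol)
      (abs_le_one_of_dotProduct_self hvn) hε
  have he : V.col k ⬝ᵥ (M' - M) *ᵥ v = (μ - l k) * (Vᵀ *ᵥ v) k := by
    have h := transpose_mulVec_of_diagonalization hV hM v k
    change V.col k ⬝ᵥ M *ᵥ v = l k * (V.col k ⬝ᵥ v) at h
    change _ = _ * (V.col k ⬝ᵥ v)
    rw [sub_mulVec, dotProduct_sub, hv, h, dotProduct_smul, smul_eq_mul]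
    ring
  rw [he, abs_mul, abs_of_neg (by linarith)] at hb
  rw [le_div_iff₀ hg]
  nlinarith [abs_nonneg ((Vᵀ *ᵥ v) k)]

/-- On vectors almost in a degenerate eigenspace (eigenvalue `c`), the quadratic form of `M`
deviates from `c` times the inner product only to second order. -/
lemma abs_dotProduct_mulVec_sub_le (hV : Vᵀ * V = 1)
    (hM : M = V * diagonal l * Vᵀ) {u v : Fin n → ℝ} {c δ : ℝ}
    (hu : ∀ k, l k = c ∨ |(Vᵀ *ᵥ u) k| ≤ δ) (hv : ∀ k, l k = c ∨ |(Vᵀ *ᵥ v) k| ≤ δ) :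
    |u ⬝ᵥ M *ᵥ v - c * (u ⬝ᵥ v)| ≤ (∑ k, |l k - c|) * δ ^ 2 := by
  rw [dotProduct_mulVec_of_diagonalization hM, ← dotProduct_mulVec_transpose hV, dotProduct,
    Finset.mul_sum, ← Finset.sum_sub_distrib, Finset.sum_mul]
  refine (Finset.abs_sum_le_sum_abs _ _).trans (Finset.sum_le_sum fun k _ => ?_)
  rw [← sub_mul, abs_mul, abs_mul]
  rcases hu k with h | h
  · simp [h]
  rcases hv k with h' | h'
  · simp [h']
  rw [sq]
  have := (abs_nonneg _).trans h
  gcongr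

end Spectral

section Calculus

variable {E : Type*} [NormedAddCommGroup E] [NormedSpace ℝ E]

/-- Second-order Taylor estimate expanded at the moving point. -/
lemma eventually_taylor_le {f : E → ℝ} (hf : ContDiff ℝ 2 f) (a : E) :
    ∃ C : ℝ, ∀ᶠ r in nhds a, |f a - f r - fderiv ℝ f r (a - r)| ≤ C * ‖r - a‖ ^ 2 := by
  have hd : ContDiff ℝ 1 (fderiv ℝ f) := hf.fderiv_right (by norm_num)
  obtain ⟨K, t, ht, hK⟩ := hd.contDiffAt.exists_lipschitzOnWith (x := a)
  obtain ⟨ρ, hρ, hρt⟩ := Metric.mem_nhds_iff.mp ht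
  refine ⟨K, ?_⟩
  filter_upwards [Metric.ball_mem_nhds a hρ] with r hr
  have hseg : segment ℝ r a ⊆ t :=
    ((convex_ball a ρ).segment_subset hr (Metric.mem_ball_self hρ)).trans hρt
  have := (convex_segment (𝕜 := ℝ) r a).norm_image_sub_le_of_norm_hasFDerivWithin_le'
    (f := f) (f' := fderiv ℝ f) (φ := fderiv ℝ f r) (C := K * ‖r - a‖)
    (fun z _ => (hf.differentiable (by norm_num) z).hasFDerivAt.hasFDerivWithinAt)
    (fun z hz => by
      refine (hK.norm_sub_le (hseg hz) (hρt hr)).trans ?_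
      gcongr
      rw [norm_sub_rev r a]
      exact norm_sub_le_of_mem_segment hz)
    (left_mem_segment ℝ r a) (right_mem_segment ℝ r a)
  rw [Real.norm_eq_abs] at this
  refine this.trans (le_of_eq ?_)
  rw [norm_sub_rev a r]
  ring

lemma eventually_abs_sub_le {f : E → ℝ} (hf : ContDiff ℝ 2 f) (a : E) :
    ∃ C : ℝ, ∀ᶠ r in nhds a, |f r - f a| ≤ C * ‖r - a‖ := by
  obtain ⟨K, t, ht, hK⟩ := (hf.of_le (by norm_num : (1 : WithTop ℕ∞) ≤ 2)).contDiffAt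
    |>.exists_lipschitzOnWith (x := a)
  refine ⟨K, ?_⟩
  filter_upwards [ht] with r hr
  simpa using hK.norm_sub_le hr (mem_of_mem_nhds ht)

/-- Finitely many eventual estimates `|f i j r| ≤ C i j * g r` hold with a common constant. -/
lemma exists_common_bound {ι X : Type*} [Fintype ι] {l : Filter X} {f : ι → ι → X → ℝ}
    {g : X → ℝ} (hg : ∀ x, 0 ≤ g x)
    (h : ∀ i j, ∃ C : ℝ, ∀ᶠ x in l, |f i j x| ≤ C * g x) :
    ∃ C > 0, ∀ᶠ x in l, ∀ i j, |f i j x| ≤ C * g x := by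
  choose C hC using h
  refine ⟨1 + ∑ i, ∑ j, |C i j|, by positivity, ?_⟩
  filter_upwards [Filter.eventually_all.mpr fun i => Filter.eventually_all.mpr (hC i)]
    with x hx i j
  refine (hx i j).trans (mul_le_mul_of_nonneg_right ?_ (hg x))
  have h₁ : |C i j| ≤ ∑ j, |C i j| :=
    Finset.single_le_sum (f := fun j => |C i j|) (fun _ _ => abs_nonneg _) (Finset.mem_univ j)
  have h₂ : ∑ j, |C i j| ≤ ∑ i, ∑ j, |C i j| :=
    Finset.single_le_sum (f := fun i => ∑ j, |C i j|)
      (fun _ _ => Finset.sum_nonneg fun _ _ => abs_nonneg _) (Finset.mem_univ i)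
  linarith [le_abs_self (C i j)]

end Calculus

section Family

variable {n : ℕ} {A : ℝ × ℝ → Matrix (Fin n) (Fin n) ℝ}

lemma entryDeriv_transpose (hAsym : ∀ r, (A r)ᵀ = A r) (r h : ℝ × ℝ) :
    (entryDeriv A r h)ᵀ = entryDeriv A r h := by
  ext i j
  have : (fun p => A p j i) = fun p => A p i j := by
    ext p
    exact congrFun (congrFun (hAsym p) i) j
  simp [entryDeriv, this]

lemma hasFDerivAt_dotProduct_mulVec (hA : ∀ i j, ContDiff ℝ 2 fun r => A r i j)
    (u v : Fin n → ℝ) (r : ℝ × ℝ) :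
    HasFDerivAt (fun p => u ⬝ᵥ A p *ᵥ v)
      (∑ i, ∑ j, (u i * v j) • fderiv ℝ (fun p => A p i j) r) r := by
  simp only [dotProduct_mulVec_eq_sum]
  refine HasFDerivAt.fun_sum fun i _ => HasFDerivAt.fun_sum fun j _ => ?_
  exact (((hA i j).differentiable (by norm_num)) r).hasFDerivAt.const_mul _

lemma fderiv_dotProduct_mulVec (hA : ∀ i j, ContDiff ℝ 2 fun r => A r i j)
    (u v : Fin n → ℝ) (r h : ℝ × ℝ) :
    fderiv ℝ (fun p => u ⬝ᵥ A p *ᵥ v) r h = u ⬝ᵥ entryDeriv A r h *ᵥ v := by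
  rw [(hasFDerivAt_dotProduct_mulVec hA u v r).fderiv, dotProduct_mulVec_eq_sum]
  simp [entryDeriv]

lemma Jmat_tildeA (hA : ∀ i j, ContDiff ℝ 2 fun r => A r i j) (v₁ v₂ : Fin n → ℝ) (r : ℝ × ℝ) :
    Jmat (tildeA A v₁ v₂) r
      = targetJac (entryDeriv A r (1, 0)) (entryDeriv A r (0, 1)) v₁ v₂ := by
  have hd (u v : Fin n → ℝ) : DifferentiableAt ℝ (fun p => u ⬝ᵥ A p *ᵥ v) r :=
    (hasFDerivAt_dotProduct_mulVec hA u v r).differentiableAt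
  simp only [Jmat, tildeA, pdx, pdy, targetJac, of_apply, cons_val', cons_val_zero, cons_val_one,
    cons_val_fin_one]
  rw [fderiv_fun_sub (hd _ _) (hd _ _), fderiv_const_mul (hd _ _)]
  simp [fderiv_dotProduct_mulVec hA]

lemma continuous_entryDeriv (hA : ∀ i j, ContDiff ℝ 2 fun r => A r i j) (h : ℝ × ℝ) :
    Continuous fun r => entryDeriv A r h :=
  continuous_matrix fun i j =>
    ((hA i j).continuous_fderiv (by norm_num)).clm_apply continuous_const

lemma entryDeriv_eq_add (r h : ℝ × ℝ) :
    entryDeriv A r h = h.1 • entryDeriv A r (1, 0) + h.2 • entryDeriv A r (0, 1) := by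
  ext i j
  have : h = h.1 • ((1 : ℝ), (0 : ℝ)) + h.2 • ((0 : ℝ), (1 : ℝ)) := by ext <;> simp
  conv_lhs => rw [this]
  simp only [entryDeriv, of_apply, map_add, map_smul, Matrix.add_apply, Matrix.smul_apply]

end Family

lemma isCompact_orthonormal_pairs (n : ℕ) :
    IsCompact {y : (Fin n → ℝ) × (Fin n → ℝ) |
      y.1 ⬝ᵥ y.1 = 1 ∧ y.2 ⬝ᵥ y.2 = 1 ∧ y.1 ⬝ᵥ y.2 = 0} := by
  refine Metric.isCompact_of_isClosed_isBounded ?_ ?_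
  · refine (isClosed_eq ?_ continuous_const).inter ((isClosed_eq ?_ continuous_const).inter
      (isClosed_eq ?_ continuous_const)) <;> fun_prop
  · refine (Metric.isBounded_closedBall (x := 0) (r := 1)).subset fun y hy => ?_
    rw [mem_closedBall_zero_iff, Prod.norm_def]
    exact max_le ((pi_norm_le_iff_of_nonneg zero_le_one).mpr (abs_le_one_of_dotProduct_self hy.1))
      ((pi_norm_le_iff_of_nonneg zero_le_one).mpr (abs_le_one_of_dotProduct_self hy.2.1))

/-- Solving a `2 × 2` system whose residual is of size `ρ` gives an error of size `2 * B * ρ / δ`. -/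
lemma norm_sub_mulVec2_inv_le {J : Matrix (Fin 2) (Fin 2) ℝ} {B δ ρ : ℝ} (hδ : 0 < δ)
    (hdet : δ ≤ |J.det|) (hB : ∀ i j, |J i j| ≤ B) {x y : ℝ × ℝ}
    (hxy : ‖mulVec2 J x - y‖ ≤ ρ) :
    ‖x - mulVec2 J⁻¹ y‖ ≤ 2 * B * ρ / δ := by
  have hne : J.det ≠ 0 := abs_pos.mp (hδ.trans_le hdet)
  have h₁ : |J 0 0 * x.1 + J 0 1 * x.2 - y.1| ≤ ρ := (norm_fst_le _).trans hxy
  have h₂ : |J 1 0 * x.1 + J 1 1 * x.2 - y.2| ≤ ρ := (norm_snd_le _).trans hxy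
  have hB0 : 0 ≤ B := (abs_nonneg _).trans (hB 0 0)
  have bound {p q s t : ℝ} (hp : |p| ≤ B) (hq : |q| ≤ B) (hs : |s| ≤ ρ) (ht : |t| ≤ ρ) :
      |J.det⁻¹ * (p * s - q * t)| ≤ 2 * B * ρ / δ := by
    rw [abs_mul, abs_inv, inv_mul_eq_div]
    refine div_le_div₀ ?_ ?_ hδ hdet
    · have := (abs_nonneg s).trans hs
      positivity
    · calc |p * s - q * t| ≤ |p| * |s| + |q| * |t| := by
            rw [← abs_mul, ← abs_mul]; exact abs_sub _ _
        _ ≤ B * ρ + B * ρ := by gcongr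
        _ = 2 * B * ρ := by ring
  have e₁ : (x - mulVec2 J⁻¹ y).1 = J.det⁻¹ * (J 1 1 * (J 0 0 * x.1 + J 0 1 * x.2 - y.1)
      - J 0 1 * (J 1 0 * x.1 + J 1 1 * x.2 - y.2)) := by
    simp only [mulVec2, inv_def, Ring.inverse_eq_inv', adjugate_fin_two, Prod.fst_sub]
    simp only [Matrix.smul_apply, of_apply, cons_val', cons_val_zero, cons_val_one, cons_val_fin_one,
      smul_eq_mul]
    field_simp
    rw [det_fin_two]
    ring
  have e₂ : (x - mulVec2 J⁻¹ y).2 = J.det⁻¹ * (J 0 0 * (J 1 0 * x.1 + J 1 1 * x.2 - y.2)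
      - J 1 0 * (J 0 0 * x.1 + J 0 1 * x.2 - y.1)) := by
    simp only [mulVec2, inv_def, Ring.inverse_eq_inv', adjugate_fin_two, Prod.snd_sub]
    simp only [Matrix.smul_apply, of_apply, cons_val', cons_val_zero, cons_val_one, cons_val_fin_one,
      smul_eq_mul]
    field_simp
    rw [det_fin_two]
    ring
  rw [Prod.norm_def, e₁, e₂]
  exact max_le (bound (hB 1 1) (hB 0 1) h₁ h₂) (bound (hB 0 0) (hB 1 0) h₂ h₁)

section Assembly

variable {n : ℕ} {A : ℝ × ℝ → Matrix (Fin n) (Fin n) ℝ}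

/-- Near `α`, the Jacobian determinants stay away from zero, uniformly over orthonormal pairs that
are nearly in the plane of the first two columns of `U`. -/
lemma eventually_lt_abs_det_targetJac (hn : 2 < n) (hA : ∀ i j, ContDiff ℝ 2 fun r => A r i j)
    (hAsym : ∀ r, (A r)ᵀ = A r) (α : ℝ × ℝ) {U : Matrix (Fin n) (Fin n) ℝ} (hU : Uᵀ * U = 1)
    (Δ : ℝ) {δ : ℝ}
    (hδ : δ < |(targetJac (entryDeriv A α (1, 0)) (entryDeriv A α (0, 1))
      (U.col ⟨0, by omega⟩) (U.col ⟨1, by omega⟩)).det|) :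
    ∀ᶠ r in nhds α, ∀ v₁ v₂ : Fin n → ℝ, v₁ ⬝ᵥ v₁ = 1 → v₂ ⬝ᵥ v₂ = 1 → v₁ ⬝ᵥ v₂ = 0 →
      (∀ k : Fin n, 2 ≤ (k : ℕ) → |(Uᵀ *ᵥ v₁) k| ≤ Δ * ‖r - α‖) →
      (∀ k : Fin n, 2 ≤ (k : ℕ) → |(Uᵀ *ᵥ v₂) k| ≤ Δ * ‖r - α‖) →
      δ < |(targetJac (entryDeriv A r (1, 0)) (entryDeriv A r (0, 1)) v₁ v₂).det| := by
  let S : Set ((ℝ × ℝ) × ((Fin n → ℝ) × (Fin n → ℝ))) := {z |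
    (∀ k : Fin n, 2 ≤ (k : ℕ) → |(Uᵀ *ᵥ z.2.1) k| ≤ Δ * ‖z.1 - α‖) ∧
    (∀ k : Fin n, 2 ≤ (k : ℕ) → |(Uᵀ *ᵥ z.2.2) k| ≤ Δ * ‖z.1 - α‖) ∧
    |(targetJac (entryDeriv A z.1 (1, 0)) (entryDeriv A z.1 (0, 1)) z.2.1 z.2.2).det| ≤ δ}
  have hS : IsClosed S := by
    have hcoord (f : (ℝ × ℝ) × ((Fin n → ℝ) × (Fin n → ℝ)) → Fin n → ℝ) (hf : Continuous f) :
        IsClosed {z | ∀ k : Fin n, 2 ≤ (k : ℕ) → |(Uᵀ *ᵥ f z) k| ≤ Δ * ‖z.1 - α‖} := by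
      simp only [Set.ofPred_forall]
      refine isClosed_iInter fun k => isClosed_iInter fun _ => isClosed_le ?_ (by fun_prop)
      exact ((continuous_apply k).comp (continuous_const.matrix_mulVec hf)).abs
    have hX := (continuous_entryDeriv hA (1, 0)).comp
      (continuous_fst (X := ℝ × ℝ) (Y := (Fin n → ℝ) × (Fin n → ℝ)))
    have hY := (continuous_entryDeriv hA (0, 1)).comp
      (continuous_fst (X := ℝ × ℝ) (Y := (Fin n → ℝ) × (Fin n → ℝ)))
    simp only [Function.comp_def] at hX hY
    have hJ : Continuous fun z : (ℝ × ℝ) × ((Fin n → ℝ) × (Fin n → ℝ)) =>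
        |(targetJac (entryDeriv A z.1 (1, 0)) (entryDeriv A z.1 (0, 1)) z.2.1 z.2.2).det| := by
      simp only [targetJac, det_fin_two_of]
      fun_prop
    exact (hcoord (fun z => z.2.1) (by fun_prop)).inter
      ((hcoord (fun z => z.2.2) (by fun_prop)).inter (isClosed_le hJ continuous_const))
  have hev := (isCompact_orthonormal_pairs n).eventually_forall_of_forall_eventually (x₀ := α)
    (P := fun r y => (r, y) ∉ S) fun y hy => hS.isOpen_compl.mem_nhds fun hyS => by
      have tail {v : Fin n → ℝ} (h : ∀ k : Fin n, 2 ≤ (k : ℕ) → |(Uᵀ *ᵥ v) k| ≤ Δ * ‖α - α‖)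
          (k : Fin n) (hk : 2 ≤ (k : ℕ)) : (Uᵀ *ᵥ v) k = 0 := by
        simpa using h k hk
      have h := abs_det_targetJac_eq_col hn hU (entryDeriv_transpose hAsym α (1, 0))
        (entryDeriv_transpose hAsym α (0, 1)) hy.1 hy.2.1 hy.2.2 (tail hyS.1) (tail hyS.2.1)
      exact absurd hyS.2.2 (by simpa [h] using hδ)
  filter_upwards [hev] with r hr v₁ v₂ h₁ h₂ h₁₂ ht₁ ht₂
  by_contra hlt
  exact hr (v₁, v₂) ⟨h₁, h₂, h₁₂⟩ ⟨ht₁, ht₂, not_lt.mp hlt⟩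

/-- Entries of the Jacobian are bounded by the entries of the partial derivatives. -/
lemma abs_targetJac_le {X Y : Matrix (Fin n) (Fin n) ℝ} {B : ℝ} (hX : ∀ i j, |X i j| ≤ B)
    (hY : ∀ i j, |Y i j| ≤ B) {v₁ v₂ : Fin n → ℝ} (h₁ : v₁ ⬝ᵥ v₁ = 1) (h₂ : v₂ ⬝ᵥ v₂ = 1)
    (i j : Fin 2) : |targetJac X Y v₁ v₂ i j| ≤ 2 * (n ^ 2 * B) := by
  have hv₁ := abs_le_one_of_dotProduct_self h₁
  have hv₂ := abs_le_one_of_dotProduct_self h₂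
  have hdiag {Z : Matrix (Fin n) (Fin n) ℝ} (hZ : ∀ i j, |Z i j| ≤ B) :
      |v₁ ⬝ᵥ Z *ᵥ v₁ - v₂ ⬝ᵥ Z *ᵥ v₂| ≤ 2 * (n ^ 2 * B) := by
    have := abs_sub (v₁ ⬝ᵥ Z *ᵥ v₁) (v₂ ⬝ᵥ Z *ᵥ v₂)
    linarith [abs_dotProduct_mulVec_le hv₁ hv₁ hZ, abs_dotProduct_mulVec_le hv₂ hv₂ hZ]
  have hoff {Z : Matrix (Fin n) (Fin n) ℝ} (hZ : ∀ i j, |Z i j| ≤ B) :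
      |2 * (v₁ ⬝ᵥ Z *ᵥ v₂)| ≤ 2 * (n ^ 2 * B) := by
    rw [abs_mul, abs_two]
    linarith [abs_dotProduct_mulVec_le hv₁ hv₂ hZ]
  fin_cases i <;> fin_cases j
  exacts [hdiag hX, hdiag hY, hoff hX, hoff hY]

lemma mulVec2_targetJac (v₁ v₂ : Fin n → ℝ) (r h : ℝ × ℝ) :
    mulVec2 (targetJac (entryDeriv A r (1, 0)) (entryDeriv A r (0, 1)) v₁ v₂) h
      = (v₁ ⬝ᵥ entryDeriv A r h *ᵥ v₁ - v₂ ⬝ᵥ entryDeriv A r h *ᵥ v₂,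
        2 * (v₁ ⬝ᵥ entryDeriv A r h *ᵥ v₂)) := by
  rw [entryDeriv_eq_add r h]
  simp only [mulVec2, targetJac, of_apply, cons_val', cons_val_zero, cons_val_one,
    cons_val_fin_one, add_mulVec, smul_mulVec, dotProduct_add, dotProduct_smul, smul_eq_mul]
  ext <;> ring

end Assembly

/-- Theorem 1 of the paper: quadratic convergence of the
eigenvector-based Newton iteration to a non-degenerate conical point. -/
theorem stmt0 {n : ℕ} (hn : 2 < n)
    (A : ℝ × ℝ → Matrix (Fin n) (Fin n) ℝ)
    (hA : ∀ i j, ContDiff ℝ 2 fun r => A r i j)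
    (hAsym : ∀ r, (A r)ᵀ = A r)
    (lam : ℝ × ℝ → Fin n → ℝ)
    (hmono : ∀ r, Monotone (lam r))
    (heig : ∀ r, ∃ V : Matrix (Fin n) (Fin n) ℝ,
      Vᵀ * V = 1 ∧ A r = V * diagonal (lam r) * Vᵀ)
    (α : ℝ × ℝ)
    (hdeg : lam α ⟨0, by omega⟩ = lam α ⟨1, by omega⟩)
    (hgap : lam α ⟨1, by omega⟩ < lam α ⟨2, by omega⟩)
    (w₁ w₂ : Fin n → ℝ)
    (hw₁ : (A α).mulVec w₁ = lam α ⟨0, by omega⟩ • w₁)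
    (hw₂ : (A α).mulVec w₂ = lam α ⟨1, by omega⟩ • w₂)
    (hw₁n : w₁ ⬝ᵥ w₁ = 1) (hw₂n : w₂ ⬝ᵥ w₂ = 1) (hw₁₂ : w₁ ⬝ᵥ w₂ = 0)
    (hJα : (Jmat (tildeA A w₁ w₂) α).det ≠ 0) :
    ∃ Ω : Set (ℝ × ℝ), IsOpen Ω ∧ α ∈ Ω ∧ ∃ C > 0, ∀ r ∈ Ω,
      ∀ v₁ v₂ : Fin n → ℝ,
        (A r).mulVec v₁ = lam r ⟨0, by omega⟩ • v₁ →
        (A r).mulVec v₂ = lam r ⟨1, by omega⟩ • v₂ →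
        v₁ ⬝ᵥ v₁ = 1 → v₂ ⬝ᵥ v₂ = 1 → v₁ ⬝ᵥ v₂ = 0 →
        ‖(r - mulVec2 (Jmat (tildeA A v₁ v₂) r)⁻¹
            (lam r ⟨0, by omega⟩ - lam r ⟨1, by omega⟩, 0)) - α‖ ≤ C * ‖r - α‖ ^ 2 := by
  have h2 (k : Fin n) (hk : 2 ≤ (k : ℕ)) : lam α ⟨2, by omega⟩ ≤ lam α k :=
    hmono α (Fin.mk_le_of_le_val hk)
  obtain ⟨U, hU, hAα⟩ := heig α
  set c := lam α ⟨0, by omega⟩ with hc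
  obtain ⟨g, hg, hgc⟩ : ∃ g > 0, c + 2 * g = lam α ⟨2, by omega⟩ :=
    ⟨(lam α ⟨2, by omega⟩ - c) / 2, by linarith, by ring⟩
  have hlow (k : Fin n) (hk : ¬ 2 ≤ (k : ℕ)) : lam α k = c := by
    have : k = ⟨0, by omega⟩ ∨ k = ⟨1, by omega⟩ := by
      simp only [Fin.ext_iff]
      omega
    rcases this with h | h
    · rw [h]
    · rw [h, hdeg]
  -- uniform estimates on the entries near `α`
  obtain ⟨L, hL0, hL⟩ := exists_common_bound (g := fun r => ‖r - α‖) (fun r => norm_nonneg _)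
    fun i j => eventually_abs_sub_le (hA i j) α
  obtain ⟨T, hT0, hT⟩ := exists_common_bound (g := fun r => ‖r - α‖ ^ 2) (fun r => by positivity)
    fun i j => eventually_taylor_le (hA i j) α
  have hbd (h : ℝ × ℝ) : ∃ B > 0, ∀ᶠ r in nhds α, ∀ i j, |entryDeriv A r h i j| ≤ B * 1 :=
    exists_common_bound (g := fun _ : ℝ × ℝ => (1 : ℝ)) (fun _ => zero_le_one) fun i j => by
      have hcont : Continuous fun r => |entryDeriv A r h i j| :=
        ((continuous_entryDeriv hA h).matrix_elem i j).abs
      refine ⟨|entryDeriv A α h i j| + 1, ?_⟩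
      filter_upwards [hcont.continuousAt.eventually_lt continuousAt_const (lt_add_one _)] with r hr
      linarith
  obtain ⟨B₁, hB₁0, hB₁⟩ := hbd (1, 0)
  obtain ⟨B₂, hB₂0, hB₂⟩ := hbd (0, 1)
  have hsmall : ∀ᶠ r in nhds α, (n : ℝ) ^ 2 * (L * ‖r - α‖) < g := by
    have hcont : Continuous fun r : ℝ × ℝ => (n : ℝ) ^ 2 * (L * ‖r - α‖) := by fun_prop
    exact hcont.continuousAt.eventually_lt continuousAt_const (by simpa using hg)
  -- nondegeneracy in the eigenvector basis of `A α` given by the columns of `U`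
  have hwtail {w : Fin n → ℝ} (hw : A α *ᵥ w = c • w) (k : Fin n) (hk : 2 ≤ (k : ℕ)) :
      (Uᵀ *ᵥ w) k = 0 := by
    have h := transpose_mulVec_of_diagonalization hU hAα w k
    rw [hw, mulVec_smul, Pi.smul_apply, smul_eq_mul] at h
    have := h2 k hk
    exact (mul_eq_zero.mp (by linear_combination h :
      (c - lam α k) * (Uᵀ *ᵥ w) k = 0)).resolve_left (by linarith)
  rw [Jmat_tildeA hA, ← abs_pos, abs_det_targetJac_eq_col hn hU
    (entryDeriv_transpose hAsym α (1, 0)) (entryDeriv_transpose hAsym α (0, 1)) hw₁n hw₂n hw₁₂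
    (hwtail hw₁) (hwtail (hdeg ▸ hw₂))] at hJα
  obtain ⟨δ, hδ0, hδ⟩ := exists_between hJα
  have hdet := eventually_lt_abs_det_targetJac hn hA hAsym α hU ((n : ℝ) ^ 2 * L / g) hδ
  set Δ := (n : ℝ) ^ 2 * L / g with hΔ
  set E := (n : ℝ) ^ 2 * T + (∑ k, |lam α k - c|) * Δ ^ 2 with hE
  have hn0 : (0 : ℝ) < n := by exact_mod_cast (by omega : 0 < n)
  have hE0 : 0 < E := by
    positivity
  set B := max B₁ B₂
  have hB0 : 0 < B := lt_max_of_lt_left hB₁0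
  obtain ⟨Ω, hΩ, hΩo, hαΩ⟩ := eventually_nhds_iff.mp
    (hL.and (hT.and (hB₁.and (hB₂.and (hsmall.and hdet)))))
  refine ⟨Ω, hΩo, hαΩ, 2 * (2 * (n ^ 2 * B)) * (2 * E) / δ, by positivity, ?_⟩
  intro r hr v₁ v₂ hv₁ hv₂ hn₁ hn₂ hn₁₂
  obtain ⟨hLr, hTr, hB₁r, hB₂r, hsmallr, hdetr⟩ := hΩ r hr
  -- the two lowest eigenvalues stay below the gap
  have hlam₁ : lam r ⟨1, by omega⟩ ≤ c + g := by
    obtain ⟨V, hV, hAr⟩ := heig r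
    refine second_eigenvalue_le hn hV hAr (hmono r) hw₁n hw₂n hw₁₂ fun s t hst => ?_
    set x := s • w₁ + t • w₂ with hx
    have hw₂₁ : w₂ ⬝ᵥ w₁ = 0 := by rw [dotProduct_comm, hw₁₂]
    have hxx : x ⬝ᵥ x = 1 := by
      simp only [hx, add_dotProduct, dotProduct_add, smul_dotProduct, dotProduct_smul,
        smul_eq_mul, hw₁n, hw₂n, hw₁₂, hw₂₁]
      linarith
    have hAx : A α *ᵥ x = c • x := by
      rw [hx, mulVec_add, mulVec_smul, mulVec_smul, hw₁, hw₂, ← hdeg, smul_add, smul_comm s,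
        smul_comm t]
    have hb : |x ⬝ᵥ (A r - A α) *ᵥ x| ≤ n ^ 2 * (L * ‖r - α‖) :=
      abs_dotProduct_mulVec_le (abs_le_one_of_dotProduct_self hxx)
        (abs_le_one_of_dotProduct_self hxx) hLr
    rw [sub_mulVec, dotProduct_sub, hAx, dotProduct_smul, hxx, smul_eq_mul, mul_one] at hb
    linarith [le_abs_self (x ⬝ᵥ A r *ᵥ x - c)]
  have hlam₀ : lam r ⟨0, by omega⟩ ≤ c + g :=
    (hmono r (Fin.mk_le_mk.mpr zero_le_one)).trans hlam₁
  have htail {v : Fin n → ℝ} {μ : ℝ} (hv : A r *ᵥ v = μ • v) (hvn : v ⬝ᵥ v = 1)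
      (hμ : μ ≤ c + g) (k : Fin n) (hk : 2 ≤ (k : ℕ)) : |(Uᵀ *ᵥ v) k| ≤ Δ * ‖r - α‖ := by
    have := abs_transpose_mulVec_le hU hAα hg hv hvn hLr (k := k) (by linarith [h2 k hk])
    refine this.trans (le_of_eq ?_)
    rw [hΔ]
    ring
  have ht₁ := htail hv₁ hn₁ hlam₀
  have ht₂ := htail hv₂ hn₂ hlam₁
  have hres {u v : Fin n → ℝ} (hun : u ⬝ᵥ u = 1) (hvn : v ⬝ᵥ v = 1)
      (hu : ∀ k : Fin n, 2 ≤ (k : ℕ) → |(Uᵀ *ᵥ u) k| ≤ Δ * ‖r - α‖)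
      (hv : ∀ k : Fin n, 2 ≤ (k : ℕ) → |(Uᵀ *ᵥ v) k| ≤ Δ * ‖r - α‖) :
      |u ⬝ᵥ entryDeriv A r (r - α) *ᵥ v - u ⬝ᵥ A r *ᵥ v + c * (u ⬝ᵥ v)| ≤ E * ‖r - α‖ ^ 2 := by
    have hTM : |u ⬝ᵥ (A α - A r + entryDeriv A r (r - α)) *ᵥ v| ≤ n ^ 2 * (T * ‖r - α‖ ^ 2) := by
      refine abs_dotProduct_mulVec_le (abs_le_one_of_dotProduct_self hun)
        (abs_le_one_of_dotProduct_self hvn) fun i j => ?_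
      have h := hTr i j
      rwa [← neg_sub r α, map_neg, sub_neg_eq_add] at h
    have hq := abs_dotProduct_mulVec_sub_le hU hAα (u := u) (v := v) (c := c)
      (δ := Δ * ‖r - α‖)
      (fun k => (em (2 ≤ (k : ℕ))).symm.imp (hlow k) (hu k))
      (fun k => (em (2 ≤ (k : ℕ))).symm.imp (hlow k) (hv k))
    rw [add_mulVec, sub_mulVec, dotProduct_add, dotProduct_sub] at hTM
    rw [abs_le] at hTM hq ⊢
    rw [hE]
    constructor <;> nlinarith
  rw [Jmat_tildeA hA, sub_right_comm]
  have hfin := norm_sub_mulVec2_inv_le (ρ := 2 * E * ‖r - α‖ ^ 2) (x := r - α)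
    (y := (lam r ⟨0, by omega⟩ - lam r ⟨1, by omega⟩, 0)) hδ0
    (hdetr v₁ v₂ hn₁ hn₂ hn₁₂ ht₁ ht₂).le
    (abs_targetJac_le (B := B) (fun i j => (hB₁r i j).trans (by simp [B]))
      (fun i j => (hB₂r i j).trans (by simp [B])) hn₁ hn₂) ?_
  · refine hfin.trans (le_of_eq ?_)
    ring
  · have r₁₁ := hres hn₁ hn₁ ht₁ ht₁
    have r₂₂ := hres hn₂ hn₂ ht₂ ht₂
    have r₁₂ := hres hn₁ hn₂ ht₁ ht₂
    rw [hv₁, dotProduct_smul, hn₁, smul_eq_mul, mul_one, mul_one] at r₁₁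
    rw [hv₂, dotProduct_smul, hn₂, smul_eq_mul, mul_one, mul_one] at r₂₂
    rw [hv₂, dotProduct_smul, hn₁₂, smul_eq_mul, mul_zero, mul_zero, sub_zero, add_zero] at r₁₂
    rw [mulVec2_targetJac, Prod.mk_sub_mk, Prod.norm_mk, sub_zero, Real.norm_eq_abs,
      Real.norm_eq_abs, max_le_iff]
    rw [abs_le] at r₁₁ r₂₂ r₁₂
    constructor <;> rw [abs_le] <;> constructor <;> linarith
end
end

section
/- Let A : ℝ² → ℝ^{n×n} be a C² family of real symmetric matrices with λ₁(α) = λ₂(α) < λ₃(α) at α, and let M ∈ C²(Ω, ℝ^{n×n}) be an orthogonal-matrix-valued block diagonalization M(r)ᵀA(r)M(r) = B(r) ⊕ Λ(r) on a neighborhood Ω of α, with B(r) a 2×2 symmetric matrix whose eigenvalues are λ₁(r), λ₂(r), and with the first two columns of M(α) equal to the eigenvectors v₁, v₂ used to define A^α. Then the Hessian at α of the discriminant disc(B(r)) = (B₁₁ − B₂₂)² + 4B₁₂² satisfies Hess_α(disc(B)) = 2 J_α(B)ᵀ J_α(B) = 2 J_α(A^α)ᵀ J_α(A^α). Consequently,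 disc(B) has a non-degenerate critical point at α if and only if det J_α(A^α) ≠ 0. -/
noncomputable section
open Matrix

/-- Where two functions vanish, the second derivative of the sum of their squares is
determined by their first derivatives. -/
theorem fderiv_fderiv_sq_add_sq {f g : ℝ × ℝ → ℝ} {α : ℝ × ℝ} (hf : ContDiffAt ℝ 2 f α)
    (hg : ContDiffAt ℝ 2 g α) (hf0 : f α = 0) (hg0 : g α = 0) (e e' : ℝ × ℝ) :
    fderiv ℝ (fun r => fderiv ℝ (fun p => f p ^ 2 + g p ^ 2) r e) α e' =
      2 * (fderiv ℝ f α e' * fderiv ℝ f α e + fderiv ℝ g α e' * fderiv ℝ g α e) := by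
  have hev : (fun r => fderiv ℝ (fun p => f p ^ 2 + g p ^ 2) r e) =ᶠ[nhds α]
      fun r => 2 * (f r * fderiv ℝ f r e + g r * fderiv ℝ g r e) := by
    filter_upwards [hf.eventually (by simp), hg.eventually (by simp)] with r hfr hgr
    have hf' := (hfr.differentiableAt (by simp)).hasFDerivAt
    have hg' := (hgr.differentiableAt (by simp)).hasFDerivAt
    rw [((hf'.pow 2).fun_add (hg'.pow 2)).fderiv]
    simp
    ring
  have hdf : DifferentiableAt ℝ (fun r => fderiv ℝ f r e) α :=
    ((hf.fderiv_right (m := 1) (by norm_num)).differentiableAt (by simp)).clm_apply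
      (differentiableAt_const e)
  have hdg : DifferentiableAt ℝ (fun r => fderiv ℝ g r e) α :=
    ((hg.fderiv_right (m := 1) (by norm_num)).differentiableAt (by simp)).clm_apply
      (differentiableAt_const e)
  have hf' := (hf.differentiableAt (by simp)).hasFDerivAt
  have hg' := (hg.differentiableAt (by simp)).hasFDerivAt
  rw [hev.fderiv_eq,
    (((hf'.fun_mul hdf.hasFDerivAt).fun_add (hg'.fun_mul hdg.hasFDerivAt)).const_mul 2).fderiv]
  simp [hf0, hg0]
  ring

/-- The first derivative of a sum of squares vanishes at a common zero. -/
theorem fderiv_sq_add_sq_eq_zero {f g : ℝ × ℝ → ℝ} {α : ℝ × ℝ} (hf : DifferentiableAt ℝ f α)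
    (hg : DifferentiableAt ℝ g α) (hf0 : f α = 0) (hg0 : g α = 0) :
    fderiv ℝ (fun p => f p ^ 2 + g p ^ 2) α = 0 := by
  rw [((hf.hasFDerivAt.pow 2).fun_add (hg.hasFDerivAt.pow 2)).fderiv]
  simp [hf0, hg0]

/-- If `a α` annihilates `p α` on the left and `q α` on the right, then the derivative at `α` of
`∑ pₖ aₖₗ qₗ` only sees the variation of `a`. -/
theorem fderiv_sum_mul_mul_of_annihilated {ι : Type*} [Fintype ι] {p q : ℝ × ℝ → ι → ℝ}
    {a : ℝ × ℝ → ι → ι → ℝ} {α : ℝ × ℝ}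
    (hp : ∀ k, DifferentiableAt ℝ (fun r => p r k) α)
    (hq : ∀ k, DifferentiableAt ℝ (fun r => q r k) α)
    (ha : ∀ k l, DifferentiableAt ℝ (fun r => a r k l) α)
    (hleft : ∀ l, ∑ k, p α k * a α k l = 0) (hright : ∀ k, ∑ l, a α k l * q α l = 0) :
    fderiv ℝ (fun r => ∑ k, ∑ l, p r k * a r k l * q r l) α =
      fderiv ℝ (fun r => ∑ k, ∑ l, p α k * a r k l * q α l) α := by
  have h₁ := HasFDerivAt.fun_sum (u := Finset.univ) fun k _ =>
    HasFDerivAt.fun_sum (u := Finset.univ) fun l _ =>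
      ((hp k).hasFDerivAt.fun_mul (ha k l).hasFDerivAt).fun_mul (hq l).hasFDerivAt
  have h₂ := HasFDerivAt.fun_sum (u := Finset.univ) fun k _ =>
    HasFDerivAt.fun_sum (u := Finset.univ) fun l _ =>
      ((ha k l).hasFDerivAt.const_mul (p α k)).mul_const (q α l)
  rw [h₁.fderiv, h₂.fderiv]
  have hq' : ∑ k, ∑ l, (p α k * a α k l) • fderiv ℝ (fun r => q r l) α = 0 := by
    rw [Finset.sum_comm]
    simp [← Finset.sum_smul, hleft]
  have hp' : ∑ k, ∑ l, q α l • a α k l • fderiv ℝ (fun r => p r k) α = 0 := by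
    simp only [smul_smul, ← Finset.sum_smul, mul_comm (q α _), hright, zero_smul,
      Finset.sum_const_zero]
  simp only [smul_add, Finset.sum_add_distrib, hq', hp', zero_add, add_zero]

/-- If the `j`-th column of `Mᵀ A M` is `c eⱼ` with `M` orthogonal, then the `j`-th column of `M`
is annihilated by `A - c`. -/
theorem sum_sub_mul_col_eq_zero {n : Type*} [Fintype n] [DecidableEq n] {A M : Matrix n n ℝ}
    {c : ℝ} {j : n} (hM : Mᵀ * M = 1) (hcol : ∀ m, (Mᵀ * A * M) m j = c * (1 : Matrix n n ℝ) m j)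
    (k : n) : ∑ l, (A - c • 1) k l * M l j = 0 := by
  have h : A * M = M * (Mᵀ * A * M) := by
    simp only [← Matrix.mul_assoc, mul_eq_one_comm.mp hM, Matrix.one_mul]
  have hk := congrFun (congrFun h k) j
  have hs : ((A - c • 1) * M) k j = 0 := by
    rw [Matrix.sub_mul, Matrix.sub_apply, hk, Matrix.mul_apply, Finset.sum_congr rfl
      fun m _ => by rw [hcol m]]
    simp [Matrix.one_apply, mul_comm]
  exact hs

/-- Theorem 2 of the paper: the Hessian of the discriminant of the
2×2 block `B` of a smooth block diagonalization equals `2 JᵀJ`, computed either from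
`B` or from `A` in the eigenvector basis at `α`; consequently `disc(B)` has a
non-degenerate critical point at `α` iff `det J_α(A^α) ≠ 0`. -/
theorem stmt1 {n : ℕ} (hn : 2 < n)
    (A : ℝ × ℝ → Matrix (Fin n) (Fin n) ℝ)
    (hA : ∀ i j, ContDiff ℝ 2 fun r => A r i j)
    (hAsym : ∀ r, (A r)ᵀ = A r)
    (lam : ℝ × ℝ → Fin n → ℝ)
    (hmono : ∀ r, Monotone (lam r))
    (heig : ∀ r, ∃ V : Matrix (Fin n) (Fin n) ℝ,
      Vᵀ * V = 1 ∧ A r = V * diagonal (lam r) * Vᵀ)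
    (α : ℝ × ℝ)
    (hdeg : lam α ⟨0, by omega⟩ = lam α ⟨1, by omega⟩)
    (hgap : lam α ⟨1, by omega⟩ < lam α ⟨2, by omega⟩)
    (Ω : Set (ℝ × ℝ)) (hΩ : IsOpen Ω) (hαΩ : α ∈ Ω)
    (M : ℝ × ℝ → Matrix (Fin n) (Fin n) ℝ)
    (hM : ∀ i j, ContDiffOn ℝ 2 (fun r => M r i j) Ω)
    (hMorth : ∀ r ∈ Ω, (M r)ᵀ * M r = 1)
    (B : ℝ × ℝ → Matrix (Fin 2) (Fin 2) ℝ)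
    (hblock : ∀ r ∈ Ω, ∀ i j : Fin 2,
      ((M r)ᵀ * A r * M r) ⟨i.val, by have := i.isLt; omega⟩ ⟨j.val, by have := j.isLt; omega⟩
        = B r i j)
    (hoff : ∀ r ∈ Ω, ∀ i j : Fin n,
      (i.val < 2 ∧ 2 ≤ j.val) ∨ (2 ≤ i.val ∧ j.val < 2) → ((M r)ᵀ * A r * M r) i j = 0)
    (hBeig : ∀ r ∈ Ω, B r 0 0 + B r 1 1 = lam r ⟨0, by omega⟩ + lam r ⟨1, by omega⟩ ∧
      (B r).det = lam r ⟨0, by omega⟩ * lam r ⟨1, by omega⟩)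
    (v₁ v₂ : Fin n → ℝ)
    (hv₁ : v₁ = fun i => M α i ⟨0, by omega⟩)
    (hv₂ : v₂ = fun i => M α i ⟨1, by omega⟩) :
    Hess2 (discB B) α = (2 : ℝ) • ((Jmat B α)ᵀ * Jmat B α) ∧
    Hess2 (discB B) α
      = (2 : ℝ) • ((Jmat (tildeA A v₁ v₂) α)ᵀ * Jmat (tildeA A v₁ v₂) α) ∧
    ((pdx (discB B) α = 0 ∧ pdy (discB B) α = 0 ∧ (Hess2 (discB B) α).det ≠ 0)
      ↔ (Jmat (tildeA A v₁ v₂) α).det ≠ 0) := by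
  have hnhds : Ω ∈ nhds α := hΩ.mem_nhds hαΩ
  have hMα : ∀ i j, ContDiffAt ℝ 2 (fun r => M r i j) α := fun i j => (hM i j).contDiffAt hnhds
  set ι : Fin 2 → Fin n := fun i => ⟨i.val, by have := i.isLt; omega⟩ with hι
  have hιinj : Function.Injective ι := fun i j h => Fin.ext (Fin.mk.inj h)
  have hBentry : ∀ r ∈ Ω, ∀ i j, ((M r)ᵀ * A r * M r) (ι i) (ι j) = B r i j := hblock
  have hconj : ∀ (N P : Matrix (Fin n) (Fin n) ℝ) (i j : Fin n),
      (Nᵀ * P * N) i j = ∑ k, ∑ l, N k i * P k l * N l j := by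
    intro N P i j
    simp only [Matrix.mul_apply, Matrix.transpose_apply, Finset.sum_mul]
    exact Finset.sum_comm
  have hBsym : ∀ r ∈ Ω, ∀ i j, B r i j = B r j i := by
    intro r hr i j
    have h : ((M r)ᵀ * A r * M r)ᵀ = (M r)ᵀ * A r * M r := by
      simp [Matrix.transpose_mul, hAsym, Matrix.mul_assoc]
    rw [← hBentry r hr i j, ← hBentry r hr j i]
    exact congrFun (congrFun h (ι j)) (ι i)
  have hBsmooth : ∀ i j, ContDiffAt ℝ 2 (fun r => B r i j) α := by
    intro i j
    have h : ContDiffAt ℝ 2 (fun r => ∑ k, ∑ l, M r k (ι i) * A r k l * M r l (ι j)) α :=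
      ContDiffAt.sum fun k _ => ContDiffAt.sum fun l _ =>
        ((hMα _ _).mul (hA k l).contDiffAt).mul (hMα _ _)
    refine h.congr_of_eventuallyEq ?_
    filter_upwards [hnhds] with r hr
    rw [← hBentry r hr, hconj]
  have hdisc : (B α 0 0 - B α 1 1) ^ 2 + (2 * B α 0 1) ^ 2 = 0 := by
    obtain ⟨htr, hdet⟩ := hBeig α hαΩ
    rw [Matrix.det_fin_two, hBsym α hαΩ 1 0, hdeg] at hdet
    rw [hdeg] at htr
    linear_combination (B α 0 0 + B α 1 1 + 2 * lam α ⟨1, by omega⟩) * htr - 4 * hdet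
  have hdiag : B α 0 0 - B α 1 1 = 0 := by nlinarith [sq_nonneg (2 * B α 0 1)]
  have hoffdiag : 2 * B α 0 1 = 0 := by nlinarith [sq_nonneg (B α 0 0 - B α 1 1)]
  set c := B α 0 0 with hc
  have hBα : ∀ i j, B α i j = c * (1 : Matrix (Fin 2) (Fin 2) ℝ) i j := by
    intro i j
    have h10 := hBsym α hαΩ 1 0
    fin_cases i <;> fin_cases j <;> simp [← hc] <;> linarith
  have hcol : ∀ j m, ((M α)ᵀ * A α * M α) m (ι j) =
      c * (1 : Matrix (Fin n) (Fin n) ℝ) m (ι j) := by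
    intro j m
    by_cases hm : m.val < 2
    · obtain ⟨i, rfl⟩ : ∃ i, m = ι i := ⟨⟨m.val, hm⟩, rfl⟩
      rw [hBentry α hαΩ, hBα]
      simp [Matrix.one_apply, hιinj.eq_iff]
    · have hne : m ≠ ι j := by
        rintro rfl
        exact hm j.isLt
      rw [hoff α hαΩ m (ι j) (Or.inr ⟨not_lt.mp hm, j.isLt⟩), Matrix.one_apply_ne hne, mul_zero]
  have hright : ∀ j k, ∑ l, (A α - c • 1) k l * M α l (ι j) = 0 := fun j k =>
    sum_sub_mul_col_eq_zero (hMorth α hαΩ) (hcol j) k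
  have hleft : ∀ i l, ∑ k, M α k (ι i) * (A α - c • 1) k l = 0 := by
    intro i l
    have hsymm : (A α - c • 1)ᵀ = A α - c • 1 := by simp [hAsym]
    rw [← hright i l]
    refine Finset.sum_congr rfl fun k _ => ?_
    rw [mul_comm, ← Matrix.transpose_apply (A α - c • 1) l k, hsymm]
  have hshift : ∀ N P : Matrix (Fin n) (Fin n) ℝ, Nᵀ * N = 1 → ∀ i j,
      (Nᵀ * P * N) (ι i) (ι j) = ∑ k, ∑ l, N k (ι i) * (P - c • 1) k l * N l (ι j) +
        c * (1 : Matrix (Fin n) (Fin n) ℝ) (ι i) (ι j) := by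
    intro N P hN i j
    rw [← hconj]
    simp [Matrix.mul_sub, Matrix.sub_mul, hN]
  have htilde : ∀ r i j, tildeA A v₁ v₂ r i j = ((M α)ᵀ * A r * M α) (ι i) (ι j) := by
    intro r i j
    subst hv₁ hv₂
    rw [hconj]
    fin_cases i <;> fin_cases j <;>
      simp [tildeA, dotProduct, Matrix.mulVec, Finset.mul_sum, mul_assoc, hι]
  have hderiv : ∀ i j, fderiv ℝ (fun r => B r i j) α =
      fderiv ℝ (fun r => tildeA A v₁ v₂ r i j) α := by
    intro i j
    have hev : (fun r => B r i j) =ᶠ[nhds α] fun r =>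
        ∑ k, ∑ l, M r k (ι i) * (A r - c • 1) k l * M r l (ι j) +
          c * (1 : Matrix (Fin n) (Fin n) ℝ) (ι i) (ι j) := by
      filter_upwards [hnhds] with r hr
      rw [← hBentry r hr, hshift _ _ (hMorth r hr)]
    simp only [htilde, hshift _ _ (hMorth α hαΩ)]
    rw [hev.fderiv_eq, fderiv_add_const, fderiv_add_const]
    exact fderiv_sum_mul_mul_of_annihilated (p := fun r k => M r k (ι i))
      (q := fun r l => M r l (ι j)) (a := fun r k l => (A r - c • 1) k l)
      (fun k => (hMα k _).differentiableAt (by simp))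
      (fun l => (hMα l _).differentiableAt (by simp))
      (fun k l => ((hA k l).contDiffAt.differentiableAt (by simp)).sub_const _)
      (hleft i) (hright j)
  have hBd : ∀ i j, DifferentiableAt ℝ (fun r => B r i j) α := fun i j =>
    (hBsmooth i j).differentiableAt (by simp)
  have htd : ∀ i j, DifferentiableAt ℝ (fun r => tildeA A v₁ v₂ r i j) α := by
    intro i j
    simp only [htilde, hconj]
    exact DifferentiableAt.fun_sum fun k _ => DifferentiableAt.fun_sum fun l _ =>
      (((hA k l).contDiffAt.differentiableAt (by simp)).const_mul _).mul_const _
  have hJ : Jmat B α = Jmat (tildeA A v₁ v₂) α := by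
    simp only [Jmat, pdx, pdy]
    rw [fderiv_fun_sub (hBd 0 0) (hBd 1 1), fderiv_fun_sub (htd 0 0) (htd 1 1),
      fderiv_const_mul (hBd 0 1), fderiv_const_mul (htd 0 1), hderiv, hderiv, hderiv]
  have hdiscB : discB B = fun r => (B r 0 0 - B r 1 1) ^ 2 + (2 * B r 0 1) ^ 2 := by
    funext r
    simp only [discB]
    ring
  have hf : ContDiffAt ℝ 2 (fun r => B r 0 0 - B r 1 1) α := (hBsmooth 0 0).sub (hBsmooth 1 1)
  have hg : ContDiffAt ℝ 2 (fun r => 2 * B r 0 1) α := contDiffAt_const.mul (hBsmooth 0 1)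
  have hH : Hess2 (discB B) α = (2 : ℝ) • ((Jmat B α)ᵀ * Jmat B α) := by
    rw [hdiscB]
    simp only [Hess2, pdx, pdy, fderiv_fderiv_sq_add_sq hf hg hdiag hoffdiag]
    ext i j
    fin_cases i <;> fin_cases j <;> simp [Jmat, pdx, pdy, Matrix.mul_apply, Fin.sum_univ_two]
  have hcrit : fderiv ℝ (discB B) α = 0 := by
    rw [hdiscB]
    exact fderiv_sq_add_sq_eq_zero (hf.differentiableAt (by simp))
      (hg.differentiableAt (by simp)) hdiag hoffdiag
  refine ⟨hH, hJ ▸ hH, ?_⟩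
  rw [hH, hJ]
  simp [pdx, pdy, hcrit, Matrix.det_mul, Matrix.det_transpose]
end
end

section
/- Let A ∈ C²(ℝ², ℝ^{2×2}) be a 2×2 real symmetric matrix-valued function of r ∈ ℝ². Then for any orthogonal matrix U ∈ ℝ^{2×2} there exists an orthogonal matrix W ∈ ℝ^{2×2} such that for all r: F(UᵀAU)(r) = W · F(A)(r) and J_r(UᵀAU) = W · J_r(A); in particular |det J_r(A)| = |det J_r(UᵀAU)| for all r. -/
noncomputable section
open Matrix

/-- The chain rule for a target function transformed by a constant matrix. -/
theorem Jmat_eq_mul_of_Ftar_eq_mulVec2 {S T : ℝ × ℝ → Matrix (Fin 2) (Fin 2) ℝ}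
    (hS : ∀ i j, Differentiable ℝ fun r => S r i j) {W : Matrix (Fin 2) (Fin 2) ℝ}
    (h : ∀ r, Ftar T r = mulVec2 W (Ftar S r)) (r : ℝ × ℝ) :
    Jmat T r = W * Jmat S r := by
  have hdiag : DifferentiableAt ℝ (fun p => S p 0 0 - S p 1 1) r :=
    ((hS 0 0).sub (hS 1 1)) r
  have hoff : DifferentiableAt ℝ (fun p => 2 * S p 0 1) r := (hS 0 1).const_mul 2 r
  have hcomb (a b : ℝ) :
      fderiv ℝ (fun p => a * (S p 0 0 - S p 1 1) + b * (2 * S p 0 1)) r =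
        a • fderiv ℝ (fun p => S p 0 0 - S p 1 1) r + b • fderiv ℝ (fun p => 2 * S p 0 1) r :=
    ((hdiag.hasFDerivAt.const_mul a).add (hoff.hasFDerivAt.const_mul b)).fderiv
  have hT₁ : (fun p => T p 0 0 - T p 1 1) =
      fun p => W 0 0 * (S p 0 0 - S p 1 1) + W 0 1 * (2 * S p 0 1) :=
    funext fun p => congrArg Prod.fst (h p)
  have hT₂ : (fun p => 2 * T p 0 1) =
      fun p => W 1 0 * (S p 0 0 - S p 1 1) + W 1 1 * (2 * S p 0 1) :=
    funext fun p => congrArg Prod.snd (h p)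
  unfold Jmat pdx pdy
  rw [hT₁, hT₂, hcomb, hcomb]
  ext i j
  fin_cases i <;> fin_cases j <;> simp [Matrix.mul_apply, Fin.sum_univ_two]

/-- The matrix by which conjugation `S ↦ Uᵀ S U` acts on the target function. -/
def conjAction (U : Matrix (Fin 2) (Fin 2) ℝ) : Matrix (Fin 2) (Fin 2) ℝ :=
  !![U 0 0 ^ 2 - U 0 1 ^ 2, U 0 0 * U 1 0 - U 0 1 * U 1 1;
     2 * (U 0 0 * U 0 1), U 0 0 * U 1 1 + U 0 1 * U 1 0]

theorem rows_orthonormal_of_transpose_mul_self {U : Matrix (Fin 2) (Fin 2) ℝ}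
    (hU : Uᵀ * U = 1) :
    U 0 0 ^ 2 + U 0 1 ^ 2 = 1 ∧ U 1 0 ^ 2 + U 1 1 ^ 2 = 1 ∧
      U 0 0 * U 1 0 + U 0 1 * U 1 1 = 0 := by
  have hU' : U * Uᵀ = 1 := mul_eq_one_comm.mp hU
  have h00 := congrFun₂ hU' 0 0
  have h11 := congrFun₂ hU' 1 1
  have h01 := congrFun₂ hU' 0 1
  simp [Matrix.mul_apply, Fin.sum_univ_two] at h00 h11 h01
  exact ⟨by linarith, by linarith, h01⟩

theorem conjAction_transpose_mul_self {U : Matrix (Fin 2) (Fin 2) ℝ} (hU : Uᵀ * U = 1) :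
    (conjAction U)ᵀ * conjAction U = 1 := by
  obtain ⟨h₀, h₁, h₀₁⟩ := rows_orthonormal_of_transpose_mul_self hU
  ext i j
  fin_cases i <;> fin_cases j <;>
    simp [conjAction, Matrix.mul_apply, Fin.sum_univ_two]
  · linear_combination (U 0 0 ^ 2 + U 0 1 ^ 2 + 1) * h₀
  · linear_combination (U 0 0 ^ 2 + U 0 1 ^ 2) * h₀₁
  · linear_combination (U 0 0 ^ 2 + U 0 1 ^ 2) * h₀₁
  · linear_combination (U 1 0 ^ 2 + U 1 1 ^ 2) * h₀ + h₁

theorem Ftar_conj {S : ℝ × ℝ → Matrix (Fin 2) (Fin 2) ℝ} (hS : ∀ r, (S r)ᵀ = S r)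
    {U : Matrix (Fin 2) (Fin 2) ℝ} (hU : Uᵀ * U = 1) (r : ℝ × ℝ) :
    Ftar (fun p => Uᵀ * S p * U) r = mulVec2 (conjAction U) (Ftar S r) := by
  have hcol : U 0 0 * U 0 1 + U 1 0 * U 1 1 = 0 := by
    simpa [Matrix.mul_apply, Fin.sum_univ_two] using congrFun₂ hU 0 1
  have hcol₀ : U 0 0 * U 0 0 + U 1 0 * U 1 0 = 1 := by
    simpa [Matrix.mul_apply, Fin.sum_univ_two] using congrFun₂ hU 0 0
  have hcol₁ : U 0 1 * U 0 1 + U 1 1 * U 1 1 = 1 := by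
    simpa [Matrix.mul_apply, Fin.sum_univ_two] using congrFun₂ hU 1 1
  have hsym : S r 1 0 = S r 0 1 := congrFun₂ (hS r) 0 1
  ext <;> simp [Ftar, mulVec2, conjAction, Matrix.mul_apply, Fin.sum_univ_two, hsym]
  · linear_combination S r 1 1 * (hcol₀ - hcol₁)
  · linear_combination 2 * S r 1 1 * hcol

/-- A matrix with `Wᵀ W = 1` does not change the absolute value of the determinant. -/
theorem abs_det_orthogonal_mul {n : Type*} [Fintype n] [DecidableEq n] {W : Matrix n n ℝ}
    (hW : Wᵀ * W = 1) (M : Matrix n n ℝ) : |(W * M).det| = |M.det| := by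
  have hdet : W.det * W.det = 1 := by
    simpa using congrArg Matrix.det hW
  have habs : |W.det| = 1 := by
    rcases mul_self_eq_one_iff.mp hdet with h | h <;> simp [h]
  rw [Matrix.det_mul, abs_mul, habs, one_mul]

/-- Lemma 1 of the paper: basis-change covariance of `F` and `J`
for 2×2 symmetric families, and invariance of `|det J|`. -/
theorem stmt2 (A : ℝ × ℝ → Matrix (Fin 2) (Fin 2) ℝ)
    (hA : ∀ i j, ContDiff ℝ 2 fun r => A r i j)
    (hAsym : ∀ r, (A r)ᵀ = A r)
    (U : Matrix (Fin 2) (Fin 2) ℝ) (hU : Uᵀ * U = 1) :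
    ∃ W : Matrix (Fin 2) (Fin 2) ℝ, Wᵀ * W = 1 ∧
      (∀ r, Ftar (fun p => Uᵀ * A p * U) r = mulVec2 W (Ftar A r)) ∧
      (∀ r, Jmat (fun p => Uᵀ * A p * U) r = W * Jmat A r) ∧
      (∀ r, |(Jmat A r).det| = |(Jmat (fun p => Uᵀ * A p * U) r).det|) := by
  have hF := Ftar_conj hAsym hU
  have hJ := Jmat_eq_mul_of_Ftar_eq_mulVec2 (fun i j => (hA i j).differentiable two_ne_zero) hF
  have hW := conjAction_transpose_mul_self hU
  exact ⟨conjAction U, hW, hF, hJ, fun r => by rw [hJ, abs_det_orthogonal_mul hW]⟩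
end
end

section
/- Let A : ℝ² → ℝ^{n×n} be a C² family of real symmetric matrices with a non-degenerate conical point at α between λ₁ and λ₂ (λ₁(α) = λ₂(α) < λ₃(α) and det J_α(A^α) ≠ 0), and let B ∈ C²(Ω, ℝ^{2×2}) be the 2×2 block of a C² orthogonal block diagonalization M(r)ᵀA(r)M(r) = B(r) ⊕ Λ(r) near α. Then there exist an open neighborhood Ω₂ of α and a constant C₂ > 0 such that for all r ∈ Ω₂, both Newton steps are defined and |σ(B, r) − σ(Ã^r, r)| ≤ C₂ |r − α|², where Ã^r(·) is the 2×2 matrix-valued function Ã^r(s) = (⟨vᵢ(r), A(s)vⱼ(r)⟩)_{i,j=1,2} built from orthonormal eigenvectors v₁(r), v₂(r) of A(r) for λ₁(r), λ₂(r). -/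
noncomputable section
open Matrix

lemma mulVec_symm_dotProduct {n : ℕ} {A : Matrix (Fin n) (Fin n) ℝ} (hA : Aᵀ = A)
    (u w : Fin n → ℝ) : u ⬝ᵥ A *ᵥ w = w ⬝ᵥ A *ᵥ u := by
  rw [dotProduct_mulVec, ← mulVec_transpose, hA, dotProduct_comm]

/-- An eigenvector lies in the invariant plane spanned by the orthonormal pair `p, q` as soon as
`A - μ + P` is invertible, where `P` is the orthogonal projection onto that plane. -/
lemma eq_add_of_det_ne_zero {n : ℕ} {A : Matrix (Fin n) (Fin n) ℝ} (hA : Aᵀ = A)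
    {p q u : Fin n → ℝ} {a b d μ : ℝ}
    (hpp : p ⬝ᵥ p = 1) (hqq : q ⬝ᵥ q = 1) (hpq : p ⬝ᵥ q = 0)
    (hp : A *ᵥ p = a • p + b • q) (hq : A *ᵥ q = b • p + d • q)
    (hdet : (A - μ • 1 + vecMulVec p p + vecMulVec q q).det ≠ 0)
    (hu : A *ᵥ u = μ • u) : u = (p ⬝ᵥ u) • p + (q ⬝ᵥ u) • q := by
  have hqp : q ⬝ᵥ p = 0 := by rw [dotProduct_comm, hpq]
  have h1 : μ * (p ⬝ᵥ u) = a * (p ⬝ᵥ u) + b * (q ⬝ᵥ u) := by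
    have := mulVec_symm_dotProduct hA p u
    rw [hu, hp] at this
    simpa [dotProduct_comm u] using this
  have h2 : μ * (q ⬝ᵥ u) = b * (p ⬝ᵥ u) + d * (q ⬝ᵥ u) := by
    have := mulVec_symm_dotProduct hA q u
    rw [hu, hq] at this
    simpa [dotProduct_comm u] using this
  have h0 : (A - μ • 1 + vecMulVec p p + vecMulVec q q) *ᵥ
      (u - ((p ⬝ᵥ u) • p + (q ⬝ᵥ u) • q)) = 0 := by
    have hPp : p ⬝ᵥ (u - ((p ⬝ᵥ u) • p + (q ⬝ᵥ u) • q)) = 0 := by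
      simp [hpp, hpq, dotProduct_sub, dotProduct_add]
    have hPq : q ⬝ᵥ (u - ((p ⬝ᵥ u) • p + (q ⬝ᵥ u) • q)) = 0 := by
      simp [hqq, hqp, dotProduct_sub, dotProduct_add]
    rw [add_mulVec, add_mulVec, sub_mulVec, vecMulVec_mulVec, vecMulVec_mulVec, hPp, hPq,
      smul_mulVec, one_mulVec, mulVec_sub, mulVec_add, mulVec_smul, mulVec_smul, hu, hp, hq]
    ext i
    simp
    linear_combination p i * h1 + q i * h2
  exact sub_eq_zero.mp (eq_zero_of_mulVec_eq_zero hdet h0)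

/-- If the eigenvalue `μ` occurs at most twice, then an orthonormal pair `p, q` of eigenvectors
for `μ` spans its eigenspace. -/
lemma eq_zero_of_orthogonal_eigenpair {n : ℕ} {A V : Matrix (Fin n) (Fin n) ℝ} {l : Fin n → ℝ}
    (hV : Vᵀ * V = 1) (hAV : A = V * diagonal l * Vᵀ) {μ : ℝ} {i j : Fin n} (hij : i ≠ j)
    (hl : ∀ k, k ≠ i → k ≠ j → l k ≠ μ) {p q u : Fin n → ℝ}
    (hpp : p ⬝ᵥ p = 1) (hqq : q ⬝ᵥ q = 1) (hpq : p ⬝ᵥ q = 0)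
    (hp : A *ᵥ p = μ • p) (hq : A *ᵥ q = μ • q) (hu : A *ᵥ u = μ • u)
    (hpu : p ⬝ᵥ u = 0) (hqu : q ⬝ᵥ u = 0) : u = 0 := by
  have hV' : V * Vᵀ = 1 := mul_eq_one_comm.mp hV
  have hsupp : ∀ x : Fin n → ℝ, A *ᵥ x = μ • x → ∀ k, k ≠ i → k ≠ j → (Vᵀ *ᵥ x) k = 0 := by
    intro x hx k hki hkj
    have h : Vᵀ *ᵥ (A *ᵥ x) = diagonal l *ᵥ (Vᵀ *ᵥ x) := by
      rw [hAV, mulVec_mulVec, mulVec_mulVec, ← mul_assoc, ← mul_assoc, hV, one_mul]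
    rw [hx, mulVec_smul] at h
    have hk := congrFun h k
    simp only [Pi.smul_apply, smul_eq_mul, mulVec_diagonal] at hk
    have : (l k - μ) * (Vᵀ *ᵥ x) k = 0 := by linarith
    exact (mul_eq_zero.mp this).resolve_left (sub_ne_zero.mpr (hl k hki hkj))
  have hdot : ∀ x y : Fin n → ℝ, A *ᵥ x = μ • x →
      x ⬝ᵥ y = (Vᵀ *ᵥ x) i * (Vᵀ *ᵥ y) i + (Vᵀ *ᵥ x) j * (Vᵀ *ᵥ y) j := by
    intro x y hx
    have h : x ⬝ᵥ y = (Vᵀ *ᵥ x) ⬝ᵥ (Vᵀ *ᵥ y) := by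
      rw [dotProduct_mulVec, ← mulVec_transpose, transpose_transpose, mulVec_mulVec, hV',
        one_mulVec]
    rw [h, dotProduct]
    refine Fintype.sum_eq_add i j hij fun k hk => ?_
    rw [hsupp x hx k hk.1 hk.2, zero_mul]
  rw [hdot _ _ hp] at hpp hpq hpu
  rw [hdot _ _ hq] at hqq hqu
  have huu := hdot u u hu
  set x := Vᵀ *ᵥ p
  set y := Vᵀ *ᵥ q
  set z := Vᵀ *ᵥ u
  have hD : (x i * y j - x j * y i) ^ 2 = 1 := by
    linear_combination (y i ^ 2 + y j ^ 2) * hpp + hqq - (x i * y i + x j * y j) * hpq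
  have hD0 : x i * y j - x j * y i ≠ 0 := by
    intro h; rw [h] at hD; norm_num at hD
  have hzi : z i = 0 := by
    refine (mul_eq_zero.mp ?_).resolve_left hD0
    linear_combination y j * hpu - x j * hqu
  have hzj : z j = 0 := by
    refine (mul_eq_zero.mp ?_).resolve_left hD0
    linear_combination x i * hqu - y i * hpu
  rw [hzi, hzj] at huu
  exact dotProduct_self_eq_zero.mp (by simpa using huu)

/-- Invertibility of `A - μ + P` at a double eigenvalue, `P` being the projection onto the
eigenspace. -/
lemma det_ne_zero_of_eigenpair {n : ℕ} {A V : Matrix (Fin n) (Fin n) ℝ} {l : Fin n → ℝ}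
    (hA : Aᵀ = A) (hV : Vᵀ * V = 1) (hAV : A = V * diagonal l * Vᵀ) {μ : ℝ} {i j : Fin n}
    (hij : i ≠ j) (hl : ∀ k, k ≠ i → k ≠ j → l k ≠ μ) {p q : Fin n → ℝ}
    (hpp : p ⬝ᵥ p = 1) (hqq : q ⬝ᵥ q = 1) (hpq : p ⬝ᵥ q = 0)
    (hp : A *ᵥ p = μ • p) (hq : A *ᵥ q = μ • q) :
    (A - μ • 1 + vecMulVec p p + vecMulVec q q).det ≠ 0 := by
  intro hdet
  obtain ⟨u, hu0, hu⟩ := exists_mulVec_eq_zero_iff.mpr hdet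
  have hqp : q ⬝ᵥ p = 0 := by rw [dotProduct_comm, hpq]
  rw [add_mulVec, add_mulVec, sub_mulVec, vecMulVec_mulVec, vecMulVec_mulVec,
    smul_mulVec, one_mulVec] at hu
  have hpu : p ⬝ᵥ u = 0 := by
    have := congrArg (fun x => p ⬝ᵥ x) hu
    have h2 := mulVec_symm_dotProduct hA p u
    simp [dotProduct_add, dotProduct_sub, hpp, hpq, h2, hp, dotProduct_comm u] at this
    exact this
  have hqu : q ⬝ᵥ u = 0 := by
    have := congrArg (fun x => q ⬝ᵥ x) hu
    have h2 := mulVec_symm_dotProduct hA q u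
    simp [dotProduct_add, dotProduct_sub, hqq, hqp, h2, hq, dotProduct_comm u] at this
    exact this
  rw [hpu, hqu] at hu
  simp [sub_eq_zero] at hu
  exact hu0 (eq_zero_of_orthogonal_eigenpair hV hAV hij hl hpp hqq hpq hp hq hu hpu hqu)

/-- A block-diagonal conjugate of `A` turns the first two columns of `M` into a basis of an
invariant plane. -/
lemma mulVec_col_of_block {n : ℕ} {A M : Matrix (Fin n) (Fin n) ℝ} (hM : Mᵀ * M = 1)
    {i j k : Fin n} (hij : i ≠ j)
    (hoff : ∀ l, l ≠ i → l ≠ j → (Mᵀ * A * M) l k = 0) :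
    A *ᵥ M.col k = (Mᵀ * A * M) i k • M.col i + (Mᵀ * A * M) j k • M.col j := by
  have hM' : M * Mᵀ = 1 := mul_eq_one_comm.mp hM
  have h : A * M = M * (Mᵀ * A * M) := by
    rw [← mul_assoc, ← mul_assoc, hM', one_mul]
  ext x
  have h1 : (A *ᵥ M.col k) x = (A * M) x k := rfl
  rw [h1, h, mul_apply, Fintype.sum_eq_add i j hij]
  · simp [mul_comm]
  · intro l hl
    rw [hoff l hl.1 hl.2, mul_zero]

lemma dotProduct_mulVec_col {n : ℕ} (A M : Matrix (Fin n) (Fin n) ℝ) (i j : Fin n) :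
    M.col i ⬝ᵥ A *ᵥ M.col j = (Mᵀ * A * M) i j := by
  rw [mul_assoc, mul_apply]
  rfl

lemma differentiableAt_fderiv_dotProduct {n : ℕ} {u w : ℝ × ℝ → Fin n → ℝ} {r : ℝ × ℝ}
    (hu : DifferentiableAt ℝ u r) (hw : DifferentiableAt ℝ w r) :
    DifferentiableAt ℝ (fun s => u s ⬝ᵥ w s) r ∧
    ∀ d, fderiv ℝ (fun s => u s ⬝ᵥ w s) r d =
      fderiv ℝ u r d ⬝ᵥ w r + u r ⬝ᵥ fderiv ℝ w r d := by
  have hu' := hasFDerivAt_pi'.mp hu.hasFDerivAt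
  have hw' := hasFDerivAt_pi'.mp hw.hasFDerivAt
  have h := HasFDerivAt.fun_sum (u := Finset.univ) fun i _ => (hu' i).mul (hw' i)
  refine ⟨h.differentiableAt, fun d => ?_⟩
  have h2 := congrArg (fun L => L d) h.fderiv
  refine h2.trans ?_
  simp [dotProduct, Finset.sum_add_distrib, mul_comm, add_comm]

lemma differentiableAt_fderiv_mulVec {n : ℕ} {A : ℝ × ℝ → Matrix (Fin n) (Fin n) ℝ} {w : ℝ × ℝ → Fin n → ℝ}
    {r : ℝ × ℝ} (hA : ∀ i j, DifferentiableAt ℝ (fun s => A s i j) r)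
    (hw : DifferentiableAt ℝ w r) :
    DifferentiableAt ℝ (fun s => A s *ᵥ w s) r ∧
    ∀ d, fderiv ℝ (fun s => A s *ᵥ w s) r d =
      (of fun i j => fderiv ℝ (fun s => A s i j) r d) *ᵥ w r + A r *ᵥ fderiv ℝ w r d := by
  have hrow : ∀ i, DifferentiableAt ℝ (fun s => A s i) r := fun i =>
    differentiableAt_pi.mpr (hA i)
  have hdot := fun i => differentiableAt_fderiv_dotProduct (hrow i) hw
  have hdiff : DifferentiableAt ℝ (fun s => A s *ᵥ w s) r :=
    differentiableAt_pi.mpr fun i => (hdot i).1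
  refine ⟨hdiff, fun d => funext fun i => ?_⟩
  have h1 : fderiv ℝ (fun s => A s *ᵥ w s) r d i = fderiv ℝ (fun s => A s i ⬝ᵥ w s) r d :=
    (congrArg (fun L => L d) ((hasFDerivAt_pi'.mp hdiff.hasFDerivAt) i).fderiv).symm
  rw [h1, (hdot i).2 d]
  have h2 : fderiv ℝ (fun s => A s i) r d = fun j => fderiv ℝ (fun s => A s i j) r d :=
    funext fun j =>
      (congrArg (fun L => L d) ((hasFDerivAt_pi'.mp (hrow i).hasFDerivAt) j).fderiv).symm
  rw [h2]
  rfl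

/-- Product rule for the bilinear form `⟨u(s), A(s) w(s)⟩`. -/
lemma differentiableAt_fderiv_bilin {n : ℕ} {A : ℝ × ℝ → Matrix (Fin n) (Fin n) ℝ}
    {u w : ℝ × ℝ → Fin n → ℝ} {r : ℝ × ℝ} (hA : ∀ i j, DifferentiableAt ℝ (fun s => A s i j) r)
    (hu : DifferentiableAt ℝ u r) (hw : DifferentiableAt ℝ w r) :
    DifferentiableAt ℝ (fun s => u s ⬝ᵥ A s *ᵥ w s) r ∧
    ∀ d, fderiv ℝ (fun s => u s ⬝ᵥ A s *ᵥ w s) r d =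
      fderiv ℝ u r d ⬝ᵥ A r *ᵥ w r + fderiv ℝ (fun s => u r ⬝ᵥ A s *ᵥ w r) r d +
        u r ⬝ᵥ A r *ᵥ fderiv ℝ w r d := by
  have hAw := differentiableAt_fderiv_mulVec hA hw
  have hAc := differentiableAt_fderiv_mulVec hA (differentiableAt_const (w r))
  refine ⟨(differentiableAt_fderiv_dotProduct hu hAw.1).1, fun d => ?_⟩
  rw [(differentiableAt_fderiv_dotProduct hu hAw.1).2, hAw.2,
    (differentiableAt_fderiv_dotProduct (differentiableAt_const (u r)) hAc.1).2, hAc.2]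
  simp [dotProduct_add, add_assoc]

/-- The Jacobian of the target function in a moving orthonormal frame `p, q` of an invariant plane
differs from the Jacobian in the frozen frame by a rank-one term proportional to the target
function. -/
lemma Jmat_moving_frame {n : ℕ} {A : ℝ × ℝ → Matrix (Fin n) (Fin n) ℝ}
    {p q : ℝ × ℝ → Fin n → ℝ} {r : ℝ × ℝ} (hA : ∀ i j, DifferentiableAt ℝ (fun s => A s i j) r)
    (hAsym : (A r)ᵀ = A r)
    (hp : DifferentiableAt ℝ p r) (hq : DifferentiableAt ℝ q r)
    (hpp : ∀ᶠ s in nhds r, p s ⬝ᵥ p s = 1) (hqq : ∀ᶠ s in nhds r, q s ⬝ᵥ q s = 1)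
    (hpq : ∀ᶠ s in nhds r, p s ⬝ᵥ q s = 0)
    {B : ℝ × ℝ → Matrix (Fin 2) (Fin 2) ℝ}
    (hB : ∀ᶠ s in nhds r, B s = tildeA A (p s) (q s) s)
    (hAp : A r *ᵥ p r = B r 0 0 • p r + B r 0 1 • q r)
    (hAq : A r *ᵥ q r = B r 0 1 • p r + B r 1 1 • q r) :
    Jmat B r = Jmat (tildeA A (p r) (q r)) r +
      !![-2 * (p r ⬝ᵥ pdx q r) * (Ftar B r).2, -2 * (p r ⬝ᵥ pdy q r) * (Ftar B r).2;
        2 * (p r ⬝ᵥ pdx q r) * (Ftar B r).1, 2 * (p r ⬝ᵥ pdy q r) * (Ftar B r).1] := by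
  have hconst : ∀ {u w : ℝ × ℝ → Fin n → ℝ} {c : ℝ}, DifferentiableAt ℝ u r →
      DifferentiableAt ℝ w r → (∀ᶠ s in nhds r, u s ⬝ᵥ w s = c) →
      ∀ d, fderiv ℝ u r d ⬝ᵥ w r + u r ⬝ᵥ fderiv ℝ w r d = 0 := by
    intro u w c hu hw h d
    rw [← (differentiableAt_fderiv_dotProduct hu hw).2 d,
      Filter.EventuallyEq.fderiv_eq (f := fun _ => c) h]
    simp
  have h00 : (fun s => B s 0 0) =ᶠ[nhds r] fun s => p s ⬝ᵥ A s *ᵥ p s :=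
    hB.mono fun s hs => by simp [hs, tildeA]
  have h11 : (fun s => B s 1 1) =ᶠ[nhds r] fun s => q s ⬝ᵥ A s *ᵥ q s :=
    hB.mono fun s hs => by simp [hs, tildeA]
  have h01 : (fun s => B s 0 1) =ᶠ[nhds r] fun s => p s ⬝ᵥ A s *ᵥ q s :=
    hB.mono fun s hs => by simp [hs, tildeA]
  have b00 := differentiableAt_fderiv_bilin hA hp hp
  have b11 := differentiableAt_fderiv_bilin hA hq hq
  have b01 := differentiableAt_fderiv_bilin hA hp hq
  have hcp := differentiableAt_const (𝕜 := ℝ) (x := r) (p r)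
  have hcq := differentiableAt_const (𝕜 := ℝ) (x := r) (q r)
  have c00 := (differentiableAt_fderiv_bilin hA hcp hcp).1
  have c11 := (differentiableAt_fderiv_bilin hA hcq hcq).1
  have c01 := (differentiableAt_fderiv_bilin hA hcp hcq).1
  have dp := hconst hp hp hpp
  have dq := hconst hq hq hqq
  have dpq := hconst hp hq hpq
  have key1 : ∀ d, fderiv ℝ (fun s => B s 0 0 - B s 1 1) r d =
      fderiv ℝ (fun s => p r ⬝ᵥ A s *ᵥ p r - q r ⬝ᵥ A s *ᵥ q r) r d +
        -2 * (p r ⬝ᵥ fderiv ℝ q r d) * (2 * B r 0 1) := by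
    intro d
    have h : (fun s => B s 0 0 - B s 1 1) =ᶠ[nhds r]
        fun s => p s ⬝ᵥ A s *ᵥ p s - q s ⬝ᵥ A s *ᵥ q s := h00.sub h11
    rw [h.fderiv_eq, fderiv_fun_sub b00.1 b11.1, fderiv_fun_sub c00 c11]
    simp only [_root_.sub_apply]
    rw [b00.2, b11.2, mulVec_symm_dotProduct hAsym (p r), mulVec_symm_dotProduct hAsym (q r),
      hAp, hAq]
    have e1 := dp d
    have e2 := dq d
    have e3 := dpq d
    simp only [dotProduct_add, dotProduct_smul, smul_eq_mul]
    rw [dotProduct_comm (p r) (fderiv ℝ p r d)] at e1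
    rw [dotProduct_comm (q r) (fderiv ℝ q r d)] at e2
    rw [dotProduct_comm (p r) (fderiv ℝ q r d)] at e3 ⊢
    linear_combination B r 0 0 * e1 - B r 1 1 * e2 + 2 * B r 0 1 * e3
  have key2 : ∀ d, fderiv ℝ (fun s => 2 * B s 0 1) r d =
      fderiv ℝ (fun s => 2 * (p r ⬝ᵥ A s *ᵥ q r)) r d +
        2 * (p r ⬝ᵥ fderiv ℝ q r d) * (B r 0 0 - B r 1 1) := by
    intro d
    have h2 : (fun s => 2 * B s 0 1) =ᶠ[nhds r] fun s => 2 * (p s ⬝ᵥ A s *ᵥ q s) :=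
      h01.mono fun s hs => congrArg (2 * ·) hs
    rw [h2.fderiv_eq, fderiv_const_mul b01.1, fderiv_const_mul c01]
    simp only [_root_.smul_apply, smul_eq_mul]
    rw [b01.2, mulVec_symm_dotProduct hAsym (p r) (fderiv ℝ q r d), hAp, hAq]
    have e1 := dp d
    have e2 := dq d
    have e3 := dpq d
    simp only [dotProduct_add, dotProduct_smul, smul_eq_mul]
    rw [dotProduct_comm (p r) (fderiv ℝ p r d)] at e1
    rw [dotProduct_comm (q r) (fderiv ℝ q r d)] at e2
    rw [dotProduct_comm (p r) (fderiv ℝ q r d)] at e3 ⊢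
    linear_combination B r 0 1 * e1 + B r 0 1 * e2 + 2 * B r 1 1 * e3
  ext i j
  fin_cases i <;> fin_cases j
  · exact key1 _
  · exact key1 _
  · exact key2 _
  · exact key2 _

/-- A change of orthonormal frame acts on the target function and on its Jacobian by the same
invertible constant matrix. -/
lemma exists_frame_change {n : ℕ} {A : ℝ × ℝ → Matrix (Fin n) (Fin n) ℝ}
    {r : ℝ × ℝ} (hA : ∀ i j, DifferentiableAt ℝ (fun s => A s i j) r)
    (hAsym : ∀ r, (A r)ᵀ = A r) {p q v w : Fin n → ℝ}
    (hpp : p ⬝ᵥ p = 1) (hqq : q ⬝ᵥ q = 1) (hpq : p ⬝ᵥ q = 0)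
    (hvv : v ⬝ᵥ v = 1) (hww : w ⬝ᵥ w = 1) (hvw : v ⬝ᵥ w = 0) {a b c d : ℝ}
    (hv : v = a • p + c • q) (hw : w = b • p + d • q) :
    ∃ R : Matrix (Fin 2) (Fin 2) ℝ, R.det ≠ 0 ∧
      Jmat (tildeA A v w) r = R * Jmat (tildeA A p q) r ∧
      Ftar (tildeA A v w) r = mulVec2 R (Ftar (tildeA A p q) r) := by
  have hqp : q ⬝ᵥ p = 0 := by rw [dotProduct_comm, hpq]
  have e1 : a * a + c * c = 1 := by
    rw [← hvv, hv]; simp [hpp, hqq, hpq, hqp]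
  have e2 : b * b + d * d = 1 := by
    rw [← hww, hw]; simp [hpp, hqq, hpq, hqp]
  have e3 : a * b + c * d = 0 := by
    rw [← hvw, hv, hw]; simp [hpp, hqq, hpq, hqp]; ring
  have hD : (a * d - b * c) ^ 2 = 1 := by
    linear_combination (b * b + d * d) * e1 + e2 - (a * b + c * d) * e3
  have hD0 : a * d - b * c ≠ 0 := by
    intro h; rw [h] at hD; norm_num at hD
  have hDd : (a * d - b * c) * d = a := by linear_combination a * e2 - b * e3
  have hDc : (a * d - b * c) * c = -b := by linear_combination a * e3 - b * e1
  have f1 : a * a + b * b = 1 := by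
    have h : a * a + b * b = c * c + d * d := by
      linear_combination (-(a + (a * d - b * c) * d)) * hDd
        + (b - (a * d - b * c) * c) * hDc + (c * c + d * d) * hD
    linarith
  have hF1 : ∀ s, v ⬝ᵥ A s *ᵥ v - w ⬝ᵥ A s *ᵥ w =
      (a * a - b * b) * (p ⬝ᵥ A s *ᵥ p - q ⬝ᵥ A s *ᵥ q) +
        (a * c - b * d) * (2 * (p ⬝ᵥ A s *ᵥ q)) := by
    intro s
    have hs := mulVec_symm_dotProduct (hAsym s) q p
    rw [hv, hw]
    simp only [mulVec_add, mulVec_smul, dotProduct_add, add_dotProduct, smul_dotProduct,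
      dotProduct_smul, smul_eq_mul, hs]
    linear_combination (q ⬝ᵥ A s *ᵥ q) * (e1 - e2)
  have hF2 : ∀ s, 2 * (v ⬝ᵥ A s *ᵥ w) =
      (2 * (a * b)) * (p ⬝ᵥ A s *ᵥ p - q ⬝ᵥ A s *ᵥ q) +
        (a * d + b * c) * (2 * (p ⬝ᵥ A s *ᵥ q)) := by
    intro s
    have hs := mulVec_symm_dotProduct (hAsym s) q p
    rw [hv, hw]
    simp only [mulVec_add, mulVec_smul, dotProduct_add, add_dotProduct, smul_dotProduct,
      dotProduct_smul, smul_eq_mul, hs]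
    linear_combination 2 * (q ⬝ᵥ A s *ᵥ q) * e3
  have hdiff : ∀ x y : Fin n → ℝ, DifferentiableAt ℝ (fun s => x ⬝ᵥ A s *ᵥ y) r := fun x y =>
    (differentiableAt_fderiv_bilin hA (differentiableAt_const x) (differentiableAt_const y)).1
  have hlin : ∀ x y : ℝ, ∀ e, fderiv ℝ (fun s => x * (p ⬝ᵥ A s *ᵥ p - q ⬝ᵥ A s *ᵥ q) +
        y * (2 * (p ⬝ᵥ A s *ᵥ q))) r e =
      x * fderiv ℝ (fun s => p ⬝ᵥ A s *ᵥ p - q ⬝ᵥ A s *ᵥ q) r e +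
        y * fderiv ℝ (fun s => 2 * (p ⬝ᵥ A s *ᵥ q)) r e := by
    intro x y e
    have hd1 := (hdiff p p).fun_sub (hdiff q q)
    have hd2 := (hdiff p q).const_mul (2 : ℝ)
    rw [fderiv_fun_add (hd1.const_mul x) (hd2.const_mul y), fderiv_const_mul hd1,
      fderiv_const_mul hd2]
    rfl
  refine ⟨!![a * a - b * b, a * c - b * d; 2 * (a * b), a * d + b * c], ?_, ?_, ?_⟩
  · rw [det_fin_two_of]
    intro h
    apply hD0
    linear_combination h - (a * d - b * c) * f1
  · have k1 : ∀ e, fderiv ℝ (fun s => v ⬝ᵥ A s *ᵥ v - w ⬝ᵥ A s *ᵥ w) r e = _ := fun e => by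
      rw [funext hF1, hlin]
    have k2 : ∀ e, fderiv ℝ (fun s => 2 * (v ⬝ᵥ A s *ᵥ w)) r e = _ := fun e => by
      rw [funext hF2, hlin]
    ext i j
    rw [mul_apply, Fin.sum_univ_two]
    fin_cases i <;> fin_cases j
    · exact k1 _
    · exact k1 _
    · exact k2 _
    · exact k2 _
  · exact Prod.ext (hF1 r) (hF2 r)

lemma mulVec2_mul (P Q : Matrix (Fin 2) (Fin 2) ℝ) (x : ℝ × ℝ) :
    mulVec2 (P * Q) x = mulVec2 P (mulVec2 Q x) := by
  ext <;> simp [mulVec2, mul_apply, Fin.sum_univ_two] <;> ring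

lemma mulVec2_inv_mul {R J : Matrix (Fin 2) (Fin 2) ℝ} (hR : R.det ≠ 0) (x : ℝ × ℝ) :
    mulVec2 (R * J)⁻¹ (mulVec2 R x) = mulVec2 J⁻¹ x := by
  rw [← mulVec2_mul, Matrix.mul_inv_rev, mul_assoc,
    nonsing_inv_mul _ (isUnit_iff_ne_zero.mpr hR), mul_one]

/-- The Newton increments for `J` and for its rank-one perturbation `J'` differ by a quantity
quadratic in the right-hand side `x`. -/
lemma mulVec2_inv_sub_inv {J J' : Matrix (Fin 2) (Fin 2) ℝ} (hJ : J.det ≠ 0) (hJ' : J'.det ≠ 0)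
    {x : ℝ × ℝ} {k l : ℝ} (h : J' = J + !![-2 * k * x.2, -2 * l * x.2; 2 * k * x.1, 2 * l * x.1]) :
    mulVec2 J'⁻¹ x - mulVec2 J⁻¹ x =
      (2 * (k * (mulVec2 J⁻¹ x).1 + l * (mulVec2 J⁻¹ x).2)) • mulVec2 J'⁻¹ (x.2, -x.1) := by
  have hx : x = mulVec2 J (mulVec2 J⁻¹ x) := by
    rw [← mulVec2_mul, mul_nonsing_inv _ (isUnit_iff_ne_zero.mpr hJ)]; simp [mulVec2]
  set y := mulVec2 J⁻¹ x
  have hy : y = mulVec2 J'⁻¹ (mulVec2 J' y) := by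
    rw [← mulVec2_mul, nonsing_inv_mul _ (isUnit_iff_ne_zero.mpr hJ')]; simp [mulVec2]
  have hJy : mulVec2 J' y = x - (2 * (k * y.1 + l * y.2)) • (x.2, -x.1) := by
    have h1 := congrArg Prod.fst hx
    have h2 := congrArg Prod.snd hx
    simp only [mulVec2] at h1 h2
    rw [h]
    ext
    · simp [mulVec2]; linear_combination -h1
    · simp [mulVec2]; linear_combination -h2
  have hsub : ∀ (G : Matrix (Fin 2) (Fin 2) ℝ) (c : ℝ) (u w : ℝ × ℝ),
      mulVec2 G (u - c • w) = mulVec2 G u - c • mulVec2 G w := by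
    intro G c u w
    ext <;> simp [mulVec2] <;> ring
  rw [hJy, hsub] at hy
  nth_rewrite 1 [hy]
  abel

lemma ContinuousAt.inv_matrix_two {J : ℝ × ℝ → Matrix (Fin 2) (Fin 2) ℝ} {α : ℝ × ℝ}
    (hJ : ContinuousAt J α) (hdet : (J α).det ≠ 0) : ContinuousAt (fun r => (J r)⁻¹) α := by
  have h1 : ContinuousAt (fun r => (J r).det) α :=
    (continuous_id.matrix_det).continuousAt.comp hJ
  have h2 : ContinuousAt (fun r => (J r).adjugate) α :=
    (continuous_id.matrix_adjugate).continuousAt.comp hJ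
  simp only [Matrix.inv_def, Ring.inverse_eq_inv']
  exact (h1.inv₀ hdet).smul h2

lemma isBigO_mulVec2 {J : ℝ × ℝ → Matrix (Fin 2) (Fin 2) ℝ} {α : ℝ × ℝ}
    (hJ : ContinuousAt J α) {x : ℝ × ℝ → ℝ × ℝ} {g : ℝ × ℝ → ℝ} (hx : x =O[nhds α] g) :
    (fun r => mulVec2 (J r) (x r)) =O[nhds α] g := by
  have hx1 : (fun r => (x r).1) =O[nhds α] g := Asymptotics.isBigO_fst_prod.trans hx
  have hx2 : (fun r => (x r).2) =O[nhds α] g := Asymptotics.isBigO_snd_prod.trans hx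
  have hent : ∀ i j, ∀ {y : ℝ × ℝ → ℝ}, y =O[nhds α] g →
      (fun r => J r i j * y r) =O[nhds α] g := by
    intro i j y hy
    have hc : ContinuousAt (fun r => J r i j) α :=
      continuousAt_pi.mp (continuousAt_pi.mp hJ i) j
    simpa using (hc.tendsto.isBigO_one ℝ).mul hy
  exact ((hent 0 0 hx1).add (hent 0 1 hx2)).prod_left ((hent 1 0 hx1).add (hent 1 1 hx2))

lemma continuousAt_matrix_two {a b c d : ℝ × ℝ → ℝ} {α : ℝ × ℝ} (ha : ContinuousAt a α)
    (hb : ContinuousAt b α) (hc : ContinuousAt c α) (hd : ContinuousAt d α) :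
    ContinuousAt (fun r => !![a r, b r; c r, d r]) α := by
  refine continuousAt_pi.mpr fun i => continuousAt_pi.mpr fun j => ?_
  fin_cases i <;> fin_cases j <;> assumption

lemma continuousAt_dotProduct {n : ℕ} {u w : ℝ × ℝ → Fin n → ℝ} {α : ℝ × ℝ}
    (hu : ContinuousAt u α) (hw : ContinuousAt w α) :
    ContinuousAt (fun r => u r ⬝ᵥ w r) α :=
  ContinuousAt.comp (g := fun x : (Fin n → ℝ) × (Fin n → ℝ) => x.1 ⬝ᵥ x.2)
    (continuous_fst.dotProduct continuous_snd).continuousAt (hu.prodMk hw)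

lemma contDiffAt_bilin {n : ℕ} {A : ℝ × ℝ → Matrix (Fin n) (Fin n) ℝ}
    {u w : ℝ × ℝ → Fin n → ℝ} {r : ℝ × ℝ} (hA : ∀ i j, ContDiffAt ℝ 2 (fun s => A s i j) r)
    (hu : ContDiffAt ℝ 2 u r) (hw : ContDiffAt ℝ 2 w r) :
    ContDiffAt ℝ 2 (fun s => u s ⬝ᵥ A s *ᵥ w s) r := by
  rw [contDiffAt_pi] at hu hw
  unfold dotProduct mulVec dotProduct
  exact ContDiffAt.sum fun i _ => (hu i).mul (ContDiffAt.sum fun j _ => (hA i j).mul (hw j))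

/-- The Jacobian of a `C²` family is continuous. -/
lemma continuousAt_Jmat {S : ℝ × ℝ → Matrix (Fin 2) (Fin 2) ℝ} {α : ℝ × ℝ}
    (hS : ∀ i j, ContDiffAt ℝ 2 (fun r => S r i j) α) : ContinuousAt (Jmat S) α := by
  have hcont : ∀ {f : ℝ × ℝ → ℝ}, ContDiffAt ℝ 2 f α → ∀ d,
      ContinuousAt (fun r => fderiv ℝ f r d) α := fun hf d =>
    (hf.continuousAt_fderiv two_ne_zero).clm_apply continuousAt_const
  have h1 := (hS 0 0).sub (hS 1 1)
  have h2 := contDiffAt_const (c := (2 : ℝ)).mul (hS 0 1)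
  exact continuousAt_matrix_two (hcont h1 _) (hcont h1 _) (hcont h2 _) (hcont h2 _)

lemma continuousAt_det_shift {n : ℕ} {A : ℝ × ℝ → Matrix (Fin n) (Fin n) ℝ}
    {p q : ℝ × ℝ → Fin n → ℝ} {μ : ℝ × ℝ → ℝ} {α : ℝ × ℝ}
    (hA : ∀ i j, ContinuousAt (fun r => A r i j) α) (hp : ContinuousAt p α)
    (hq : ContinuousAt q α) (hμ : ContinuousAt μ α) :
    ContinuousAt (fun r => (A r - μ r • (1 : Matrix (Fin n) (Fin n) ℝ) +
      vecMulVec (p r) (p r) + vecMulVec (q r) (q r)).det) α := by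
  have hp' := continuousAt_pi.mp hp
  have hq' := continuousAt_pi.mp hq
  have h : ContinuousAt (fun r => A r - μ r • (1 : Matrix (Fin n) (Fin n) ℝ) +
      vecMulVec (p r) (p r) + vecMulVec (q r) (q r)) α :=
    continuousAt_pi.mpr fun i => continuousAt_pi.mpr fun j =>
      ((((hA i j).sub (hμ.mul continuousAt_const)).add ((hp' i).mul (hp' j))).add
        ((hq' i).mul (hq' j)))
  exact (continuous_id.matrix_det).continuousAt.comp h

/-- Two ordered numbers with continuous sum and product depend continuously on the parameter. -/
lemma continuousAt_of_add_mul {x y t d : ℝ × ℝ → ℝ} {α : ℝ × ℝ}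
    (ht : ContinuousAt t α) (hd : ContinuousAt d α)
    (h : ∀ᶠ r in nhds α, x r ≤ y r ∧ t r = x r + y r ∧ d r = x r * y r) :
    ContinuousAt x α ∧ ContinuousAt y α := by
  have hs : ContinuousAt (fun r => √(t r ^ 2 - 4 * d r)) α :=
    ((ht.pow 2).sub (continuousAt_const.mul hd)).sqrt
  have hsq : ∀ᶠ r in nhds α, √(t r ^ 2 - 4 * d r) = y r - x r := by
    filter_upwards [h] with r hr
    rw [hr.2.1, hr.2.2, show (x r + y r) ^ 2 - 4 * (x r * y r) = (y r - x r) ^ 2 by ring]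
    exact Real.sqrt_sq (sub_nonneg.mpr hr.1)
  constructor
  · refine ((ht.fun_sub hs).div_const 2).congr ?_
    filter_upwards [h, hsq] with r hr hr'
    rw [hr', hr.2.1]; ring
  · refine ((ht.fun_add hs).div_const 2).congr ?_
    filter_upwards [h, hsq] with r hr hr'
    rw [hr', hr.2.1]; ring

/-- Lemma 5 of the paper: near a non-degenerate conical point the
Newton steps computed from the smooth block `B` and from the recomputed eigenvector
block `Ã^r` differ by `O(|r − α|²)`. -/
theorem stmt6 {n : ℕ} (hn : 2 < n)
    (A : ℝ × ℝ → Matrix (Fin n) (Fin n) ℝ)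
    (hA : ∀ i j, ContDiff ℝ 2 fun r => A r i j)
    (hAsym : ∀ r, (A r)ᵀ = A r)
    (lam : ℝ × ℝ → Fin n → ℝ)
    (hmono : ∀ r, Monotone (lam r))
    (heig : ∀ r, ∃ V : Matrix (Fin n) (Fin n) ℝ,
      Vᵀ * V = 1 ∧ A r = V * diagonal (lam r) * Vᵀ)
    (α : ℝ × ℝ)
    (hdeg : lam α ⟨0, by omega⟩ = lam α ⟨1, by omega⟩)
    (hgap : lam α ⟨1, by omega⟩ < lam α ⟨2, by omega⟩)
    -- non-degeneracy of the conical point, via an orthonormal eigenpair at `α`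
    (w₁ w₂ : Fin n → ℝ)
    (hw₁ : (A α).mulVec w₁ = lam α ⟨0, by omega⟩ • w₁)
    (hw₂ : (A α).mulVec w₂ = lam α ⟨1, by omega⟩ • w₂)
    (hw₁n : w₁ ⬝ᵥ w₁ = 1) (hw₂n : w₂ ⬝ᵥ w₂ = 1) (hw₁₂ : w₁ ⬝ᵥ w₂ = 0)
    (hJα : (Jmat (tildeA A w₁ w₂) α).det ≠ 0)
    -- the smooth orthogonal block diagonalization near `α`
    (Ω : Set (ℝ × ℝ)) (hΩ : IsOpen Ω) (hαΩ : α ∈ Ω)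
    (M : ℝ × ℝ → Matrix (Fin n) (Fin n) ℝ)
    (hM : ∀ i j, ContDiffOn ℝ 2 (fun r => M r i j) Ω)
    (hMorth : ∀ r ∈ Ω, (M r)ᵀ * M r = 1)
    (B : ℝ × ℝ → Matrix (Fin 2) (Fin 2) ℝ)
    (hblock : ∀ r ∈ Ω, ∀ i j : Fin 2,
      ((M r)ᵀ * A r * M r) ⟨i.val, by have := i.isLt; omega⟩ ⟨j.val, by have := j.isLt; omega⟩
        = B r i j)
    (hoff : ∀ r ∈ Ω, ∀ i j : Fin n,
      (i.val < 2 ∧ 2 ≤ j.val) ∨ (2 ≤ i.val ∧ j.val < 2) → ((M r)ᵀ * A r * M r) i j = 0)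
    (hBeig : ∀ r ∈ Ω, B r 0 0 + B r 1 1 = lam r ⟨0, by omega⟩ + lam r ⟨1, by omega⟩ ∧
      (B r).det = lam r ⟨0, by omega⟩ * lam r ⟨1, by omega⟩) :
    ∃ Ω₂ ⊆ Ω, IsOpen Ω₂ ∧ α ∈ Ω₂ ∧ ∃ C₂ > 0, ∀ r ∈ Ω₂,
      ∀ v₁ v₂ : Fin n → ℝ,
        (A r).mulVec v₁ = lam r ⟨0, by omega⟩ • v₁ →
        (A r).mulVec v₂ = lam r ⟨1, by omega⟩ • v₂ →
        v₁ ⬝ᵥ v₁ = 1 → v₂ ⬝ᵥ v₂ = 1 → v₁ ⬝ᵥ v₂ = 0 →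
        (Jmat B r).det ≠ 0 ∧ (Jmat (tildeA A v₁ v₂) r).det ≠ 0 ∧
        ‖(r - mulVec2 (Jmat B r)⁻¹ (Ftar B r)) -
            (r - mulVec2 (Jmat (tildeA A v₁ v₂) r)⁻¹ (Ftar (tildeA A v₁ v₂) r))‖
          ≤ C₂ * ‖r - α‖ ^ 2 := by
  have h01 : (⟨0, by omega⟩ : Fin n) ≠ ⟨1, by omega⟩ := by simp
  have h01le : (⟨0, by omega⟩ : Fin n) ≤ ⟨1, by omega⟩ := by simp
  have hcol : ∀ k : Fin n, k ≠ ⟨0, by omega⟩ → k ≠ ⟨1, by omega⟩ → 2 ≤ k.val := by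
    intro k h0 h1
    rw [ne_eq, Fin.ext_iff] at h0 h1
    dsimp only at h0 h1
    omega
  have hlam : ∀ k, k ≠ ⟨0, by omega⟩ → k ≠ ⟨1, by omega⟩ →
      lam α k ≠ lam α ⟨0, by omega⟩ := fun k h0 h1 =>
    (hdeg ▸ hgap.trans_le (hmono α (Fin.mk_le_of_le_val (hcol k h0 h1)))).ne'
  have hoff₀ : ∀ r ∈ Ω, ∀ k, k ≠ ⟨0, by omega⟩ → k ≠ ⟨1, by omega⟩ →
      ((M r)ᵀ * A r * M r) k ⟨0, by omega⟩ = 0 := fun r hr k h0 h1 =>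
    hoff r hr _ _ (Or.inr ⟨hcol k h0 h1, by simp⟩)
  have hoff₁ : ∀ r ∈ Ω, ∀ k, k ≠ ⟨0, by omega⟩ → k ≠ ⟨1, by omega⟩ →
      ((M r)ᵀ * A r * M r) k ⟨1, by omega⟩ = 0 := fun r hr k h0 h1 =>
    hoff r hr _ _ (Or.inr ⟨hcol k h0 h1, by simp⟩)
  have hB00 := fun r hr => hblock r hr 0 0
  have hB01 := fun r hr => hblock r hr 0 1
  have hB10 := fun r hr => hblock r hr 1 0
  have hB11 := fun r hr => hblock r hr 1 1
  simp only [Fin.val_zero, Fin.val_one] at hB00 hB01 hB10 hB11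
  clear hcol hblock hoff hgap
  generalize (⟨0, by omega⟩ : Fin n) = i at *
  generalize (⟨1, by omega⟩ : Fin n) = j at *
  -- the moving frame given by the first two columns of `M`
  have hMdot : ∀ r ∈ Ω, ∀ k l, (M r).col k ⬝ᵥ (M r).col l = (1 : Matrix _ _ ℝ) k l := by
    intro r hr k l
    rw [← hMorth r hr]
    rfl
  let p : ℝ × ℝ → Fin n → ℝ := fun r => (M r).col i
  let q : ℝ × ℝ → Fin n → ℝ := fun r => (M r).col j
  have hpp : ∀ r ∈ Ω, p r ⬝ᵥ p r = 1 := fun r hr => (hMdot r hr i i).trans (one_apply_eq i)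
  have hqq : ∀ r ∈ Ω, q r ⬝ᵥ q r = 1 := fun r hr => (hMdot r hr j j).trans (one_apply_eq j)
  have hpq : ∀ r ∈ Ω, p r ⬝ᵥ q r = 0 := fun r hr => (hMdot r hr i j).trans (one_apply_ne h01)
  have hBsym : ∀ r ∈ Ω, B r 1 0 = B r 0 1 := by
    intro r hr
    rw [← hB01 r hr, ← hB10 r hr, ← dotProduct_mulVec_col, ← dotProduct_mulVec_col]
    exact mulVec_symm_dotProduct (hAsym r) _ _
  have hBt : ∀ r ∈ Ω, B r = tildeA A (p r) (q r) r := by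
    intro r hr
    ext x y
    fin_cases x <;> fin_cases y
    · exact ((dotProduct_mulVec_col _ _ _ _).trans (hB00 r hr)).symm
    · exact ((dotProduct_mulVec_col _ _ _ _).trans (hB01 r hr)).symm
    · exact ((dotProduct_mulVec_col _ _ _ _).trans (hB10 r hr)).symm
    · exact ((dotProduct_mulVec_col _ _ _ _).trans (hB11 r hr)).symm
  have hAp : ∀ r ∈ Ω, A r *ᵥ p r = B r 0 0 • p r + B r 0 1 • q r := by
    intro r hr
    have h := mulVec_col_of_block (hMorth r hr) h01 (hoff₀ r hr)
    rwa [hB00 r hr, hB10 r hr, hBsym r hr] at h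
  have hAq : ∀ r ∈ Ω, A r *ᵥ q r = B r 0 1 • p r + B r 1 1 • q r := by
    intro r hr
    have h := mulVec_col_of_block (hMorth r hr) h01 (hoff₁ r hr)
    rwa [hB01 r hr, hB11 r hr] at h
  have hΩn : ∀ r ∈ Ω, ∀ᶠ s in nhds r, s ∈ Ω := fun r hr => hΩ.mem_nhds hr
  have hpC : ∀ r ∈ Ω, ContDiffAt ℝ 2 p r := fun r hr =>
    contDiffAt_pi.mpr fun x => (hM x i).contDiffAt (hΩ.mem_nhds hr)
  have hqC : ∀ r ∈ Ω, ContDiffAt ℝ 2 q r := fun r hr =>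
    contDiffAt_pi.mpr fun x => (hM x j).contDiffAt (hΩ.mem_nhds hr)
  have hAd : ∀ r x y, DifferentiableAt ℝ (fun s => A s x y) r := fun r x y =>
    (hA x y).contDiffAt.differentiableAt two_ne_zero
  have hJ : ∀ r ∈ Ω, Jmat B r = Jmat (tildeA A (p r) (q r)) r + _ := fun r hr =>
    Jmat_moving_frame (hAd r) (hAsym r) ((hpC r hr).differentiableAt two_ne_zero)
      ((hqC r hr).differentiableAt two_ne_zero)
      ((hΩn r hr).mono hpp) ((hΩn r hr).mono hqq) ((hΩn r hr).mono hpq)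
      ((hΩn r hr).mono hBt) (hAp r hr) (hAq r hr)
  -- regularity of the block at the conical point
  have hBC : ∀ x y, ContDiffAt ℝ 2 (fun r => B r x y) α := by
    intro x y
    have hpα := hpC α hαΩ
    have hqα := hqC α hαΩ
    have hAα := fun x y => (hA x y).contDiffAt (x := α)
    refine ContDiffAt.congr_of_eventuallyEq (f := fun r => tildeA A (p r) (q r) r x y) ?_
      ((hΩn α hαΩ).mono fun r hr => congrFun (congrFun (hBt r hr) x) y)
    fin_cases x <;> fin_cases y
    · exact contDiffAt_bilin hAα hpα hpα
    · exact contDiffAt_bilin hAα hpα hqα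
    · exact contDiffAt_bilin hAα hqα hpα
    · exact contDiffAt_bilin hAα hqα hqα
  have hBc := fun x y => (hBC x y).continuousAt
  obtain ⟨hlam₀, hlam₁⟩ := continuousAt_of_add_mul (x := fun r => lam r i) (y := fun r => lam r j)
    ((hBc 0 0).add (hBc 1 1)) (((hBc 0 0).mul (hBc 1 1)).sub ((hBc 0 1).mul (hBc 1 0)))
    ((hΩn α hαΩ).mono fun r hr =>
      ⟨hmono r h01le, (hBeig r hr).1, (det_fin_two _).symm.trans (hBeig r hr).2⟩)
  have hFd : DifferentiableAt ℝ (Ftar B) α := by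
    have hd := fun x y => (hBC x y).differentiableAt two_ne_zero
    exact ((hd 0 0).sub (hd 1 1)).prodMk ((hd 0 1).const_mul 2)
  have hdisc : (B α 0 0 - B α 1 1) ^ 2 + (2 * B α 0 1) ^ 2 = 0 := by
    obtain ⟨htr, hdet⟩ := hBeig α hαΩ
    rw [det_fin_two, hBsym α hαΩ] at hdet
    rw [← hdeg] at htr hdet
    linear_combination (B α 0 0 + B α 1 1 + 2 * lam α i) * htr - 4 * hdet
  have hF1 : B α 0 0 - B α 1 1 = 0 := by nlinarith
  have hB01α : B α 0 1 = 0 := by nlinarith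
  have hFα : Ftar B α = 0 := Prod.ext hF1 (by simp [Ftar, hB01α])
  have hB00α : B α 0 0 = lam α i := by linarith [(hBeig α hαΩ).1]
  have hB11α : B α 1 1 = lam α i := by linarith
  have hFO : Ftar B =O[nhds α] fun r => ‖r - α‖ := by
    have h := hFd.isBigO_sub
    rw [hFα] at h
    simpa using h.norm_right
  -- the eigenvectors lie in the plane of the moving frame
  obtain ⟨V, hV, hAV⟩ := heig α
  have hTα : (A α - lam α i • 1 + vecMulVec (p α) (p α) + vecMulVec (q α) (q α)).det ≠ 0 := by
    refine det_ne_zero_of_eigenpair (hAsym α) hV hAV h01 hlam (hpp α hαΩ) (hqq α hαΩ)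
      (hpq α hαΩ) ?_ ?_
    · rw [hAp α hαΩ, hB00α, hB01α, zero_smul, add_zero]
    · rw [hAq α hαΩ, hB11α, hB01α, zero_smul, zero_add]
  have hAc : ∀ x y, ContinuousAt (fun r => A r x y) α := fun x y =>
    (hA x y).continuous.continuousAt
  have hT₀ := (continuousAt_det_shift hAc (hpC α hαΩ).continuousAt (hqC α hαΩ).continuousAt
    hlam₀).eventually_ne hTα
  have hT₁ := (continuousAt_det_shift hAc (hpC α hαΩ).continuousAt (hqC α hαΩ).continuousAt
    hlam₁).eventually_ne (hdeg ▸ hTα)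
  have hframe : ∀ r ∈ Ω,
      (A r - lam r i • 1 + vecMulVec (p r) (p r) + vecMulVec (q r) (q r)).det ≠ 0 →
      (A r - lam r j • 1 + vecMulVec (p r) (p r) + vecMulVec (q r) (q r)).det ≠ 0 →
      ∀ v₁ v₂ : Fin n → ℝ, (A r) *ᵥ v₁ = lam r i • v₁ → (A r) *ᵥ v₂ = lam r j • v₂ →
      v₁ ⬝ᵥ v₁ = 1 → v₂ ⬝ᵥ v₂ = 1 → v₁ ⬝ᵥ v₂ = 0 →
      ∃ R : Matrix (Fin 2) (Fin 2) ℝ, R.det ≠ 0 ∧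
        Jmat (tildeA A v₁ v₂) r = R * Jmat (tildeA A (p r) (q r)) r ∧
        Ftar (tildeA A v₁ v₂) r = mulVec2 R (Ftar (tildeA A (p r) (q r)) r) := by
    intro r hr h₀ h₁ v₁ v₂ hv₁ hv₂ hv₁n hv₂n hv₁₂
    have hpp := hpp r hr
    have hqq := hqq r hr
    have hpq := hpq r hr
    exact exists_frame_change (hAd r) hAsym hpp hqq hpq hv₁n hv₂n hv₁₂
      (eq_add_of_det_ne_zero (hAsym r) hpp hqq hpq (hAp r hr) (hAq r hr) h₀ hv₁)
      (eq_add_of_det_ne_zero (hAsym r) hpp hqq hpq (hAp r hr) (hAq r hr) h₁ hv₂)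
  -- invertibility and continuity of both Jacobians
  have hJBc : ContinuousAt (Jmat B) α := continuousAt_Jmat hBC
  have hkc : ∀ d, ContinuousAt (fun r => p r ⬝ᵥ fderiv ℝ q r d) α := fun d =>
    continuousAt_dotProduct (hpC α hαΩ).continuousAt
      (((hqC α hαΩ).continuousAt_fderiv two_ne_zero).clm_apply continuousAt_const)
  have hF1c : ContinuousAt (fun r => (Ftar B r).1) α := hFd.continuousAt.fst
  have hF2c : ContinuousAt (fun r => (Ftar B r).2) α := hFd.continuousAt.snd
  have hJpc : ContinuousAt (fun r => Jmat (tildeA A (p r) (q r)) r) α := by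
    have hN := continuousAt_matrix_two
      ((continuousAt_const (y := (-2 : ℝ)).mul (hkc (1, 0))).mul hF2c)
      ((continuousAt_const (y := (-2 : ℝ)).mul (hkc (0, 1))).mul hF2c)
      ((continuousAt_const (y := (2 : ℝ)).mul (hkc (1, 0))).mul hF1c)
      ((continuousAt_const (y := (2 : ℝ)).mul (hkc (0, 1))).mul hF1c)
    exact (hJBc.sub hN).congr ((hΩn α hαΩ).mono fun r hr => sub_eq_of_eq_add (hJ r hr))
  have hJpα : (Jmat (tildeA A (p α) (q α)) α).det ≠ 0 := by
    obtain ⟨R, -, hR, -⟩ := hframe α hαΩ hTα (hdeg ▸ hTα) w₁ w₂ hw₁ hw₂ hw₁n hw₂n hw₁₂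
    rw [hR, det_mul] at hJα
    exact right_ne_zero_of_mul hJα
  have hJBα : (Jmat B α).det ≠ 0 := by
    have h : Jmat B α = Jmat (tildeA A (p α) (q α)) α := by
      rw [hJ α hαΩ, hFα]
      ext x y
      fin_cases x <;> fin_cases y <;> simp
    rwa [h]
  have hdetJB : ∀ᶠ r in nhds α, (Jmat B r).det ≠ 0 :=
    ((continuous_id.matrix_det).continuousAt.comp hJBc).eventually_ne hJBα
  have hdetJp : ∀ᶠ r in nhds α, (Jmat (tildeA A (p r) (q r)) r).det ≠ 0 :=
    ((continuous_id.matrix_det).continuousAt.comp hJpc).eventually_ne hJpα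
  -- the quadratic estimate
  have hy := isBigO_mulVec2 (hJpc.inv_matrix_two hJpα) hFO
  have hk : ∀ d, ∀ {y : ℝ × ℝ → ℝ}, y =O[nhds α] (fun r => ‖r - α‖) →
      (fun r => (p r ⬝ᵥ fderiv ℝ q r d) * y r) =O[nhds α] fun r => ‖r - α‖ := fun d y hy => by
    simpa using ((hkc d).tendsto.isBigO_one ℝ).mul hy
  have hs := ((hk (1, 0) (Asymptotics.isBigO_fst_prod.trans hy)).add
    (hk (0, 1) (Asymptotics.isBigO_snd_prod.trans hy))).const_mul_left 2
  have hF' : (fun r => ((Ftar B r).2, -(Ftar B r).1)) =O[nhds α] fun r => ‖r - α‖ :=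
    (Asymptotics.isBigO_snd_prod.trans hFO).prod_left
      (Asymptotics.isBigO_fst_prod.trans hFO).neg_left
  have hz := isBigO_mulVec2 (hJBc.inv_matrix_two hJBα) hF'
  obtain ⟨C, hC0, hC⟩ := (hs.smul hz).exists_pos
  obtain ⟨U, hU, hUo, hαU⟩ := eventually_nhds_iff.mp
    ((hΩn α hαΩ).and (hT₀.and (hT₁.and (hdetJB.and (hdetJp.and hC.bound)))))
  refine ⟨U, fun r hr => (hU r hr).1, hUo, hαU, C, hC0,
    fun r hr v₁ v₂ hv₁ hv₂ hv₁n hv₂n hv₁₂ => ?_⟩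
  obtain ⟨hrΩ, h₀, h₁, hdB, hdp, hbound⟩ := hU r hr
  obtain ⟨R, hR, hRJ, hRF⟩ := hframe r hrΩ h₀ h₁ v₁ v₂ hv₁ hv₂ hv₁n hv₂n hv₁₂
  refine ⟨hdB, ?_, ?_⟩
  · rw [hRJ, det_mul]
    exact mul_ne_zero hR hdp
  · have hFB : Ftar (tildeA A (p r) (q r)) r = Ftar B r := by
      simp only [Ftar, hBt r hrΩ]
    rw [hRJ, hRF, mulVec2_inv_mul hR, hFB, sub_sub_sub_cancel_left, norm_sub_rev,
      mulVec2_inv_sub_inv hdp hdB (hJ r hrΩ)]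
    refine hbound.trans_eq ?_
    simp [sq]
end
end

section
/- Let A : ℝ² → ℝ^{n×n} be a C¹ family of real symmetric matrices and r₀ a point at which λ(r₀) is a simple eigenvalue of A(r₀) with unit eigenvector v. Then the eigenvalue function λ(r) is differentiable at r₀ and its gradient is given by the Hellmann–Feynman formula D_{r₀} λ = (⟨v, ∂ₓA(r₀) v⟩, ⟨v, ∂_y A(r₀) v⟩), i.e. D_{r₀}λ = D_{r₀}⟨v, A(r)v⟩. -/
noncomputable section
open Matrix

/-- The product of a function differentiable and vanishing at `x` with a function merely
continuous at `x` is differentiable at `x`. -/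
theorem HasFDerivAt.mul_continuousAt_of_eq_zero {E : Type*} [NormedAddCommGroup E]
    [NormedSpace ℝ E] {g u : E → ℝ} {g' : E →L[ℝ] ℝ} {x : E} (hg : HasFDerivAt g g' x)
    (hgx : g x = 0) (hu : ContinuousAt u x) :
    HasFDerivAt (fun y => g y * u y) (u x • g') x := by
  have hrem : HasFDerivAt (fun y => g y * (u y - u x)) (0 : E →L[ℝ] ℝ) x := by
    rw [hasFDerivAt_iff_isLittleO]
    have hO : g =O[nhds x] fun y => y - x := by simpa [hgx] using hg.isBigO_sub
    have ho : (fun y => u y - u x) =o[nhds x] fun _ => (1 : ℝ) := by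
      rw [Asymptotics.isLittleO_one_iff]
      simpa using hu.sub_const (u x)
    simpa [hgx] using (hO.norm_right.mul_isLittleO ho)
  have h := (hg.mul_const (u x)).add hrem
  rw [add_zero] at h
  exact h.congr_of_eventuallyEq (.of_forall fun y => by simp only [Pi.add_apply]; ring)

/-- A symmetric matrix shifted by a simple eigenvalue becomes invertible after adding the
projection onto the eigenline. -/
theorem Matrix.det_sub_smul_one_add_vecMulVec_ne_zero {n : Type*} [Fintype n] [DecidableEq n]
    {M : Matrix n n ℝ} (hM : Mᵀ = M) {μ : ℝ} {v : n → ℝ} (hv : M *ᵥ v = μ • v)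
    (hvn : v ⬝ᵥ v = 1) (hsimple : ∀ w : n → ℝ, M *ᵥ w = μ • w → ∃ c : ℝ, w = c • v) :
    (M - μ • 1 + vecMulVec v v).det ≠ 0 := by
  intro hdet
  obtain ⟨w, hw0, hw⟩ := Matrix.exists_mulVec_eq_zero_iff.mpr hdet
  simp only [add_mulVec, sub_mulVec, smul_mulVec, one_mulVec, vecMulVec_mulVec,
    op_smul_eq_smul] at hw
  have hvM : v ⬝ᵥ M *ᵥ w = μ * (v ⬝ᵥ w) := by
    rw [dotProduct_mulVec, ← mulVec_transpose, hM, hv, smul_dotProduct, smul_eq_mul]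
  have hvw : v ⬝ᵥ w = 0 := by
    simpa [dotProduct_add, dotProduct_sub, hvM, hvn] using congrArg (v ⬝ᵥ ·) hw
  rw [hvw, zero_smul, add_zero, sub_eq_zero] at hw
  obtain ⟨c, rfl⟩ := hsimple w hw
  rw [dotProduct_smul, hvn, smul_eq_mul, mul_one] at hvw
  exact hw0 (by rw [hvw, zero_smul])

/-- If `M - μ + v vᵀ` is invertible and `μ` is an eigenvalue of `M`, then `(M - μ + v vᵀ)⁻¹ v` is
the eigenvector normalized by having inner product one with `v`. -/
theorem Matrix.inv_mulVec_eigenvector {n : Type*} [Fintype n] [DecidableEq n]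
    {M : Matrix n n ℝ} {μ : ℝ} {v w : n → ℝ} (hdet : (M - μ • 1 + vecMulVec v v).det ≠ 0)
    (hw0 : w ≠ 0) (hw : M *ᵥ w = μ • w) :
    M *ᵥ ((M - μ • 1 + vecMulVec v v)⁻¹ *ᵥ v) = μ • ((M - μ • 1 + vecMulVec v v)⁻¹ *ᵥ v) ∧
      v ⬝ᵥ ((M - μ • 1 + vecMulVec v v)⁻¹ *ᵥ v) = 1 := by
  set T := M - μ • 1 + vecMulVec v v with hT
  set u := T⁻¹ *ᵥ v with hu
  have hTw : T *ᵥ w = (v ⬝ᵥ w) • v := by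
    simp [hT, add_mulVec, sub_mulVec, smul_mulVec, vecMulVec_mulVec, hw]
  have hwu : w = (v ⬝ᵥ w) • u := by
    rw [hu, ← mulVec_smul, ← hTw, mulVec_mulVec, nonsing_inv_mul _ hdet.isUnit, one_mulVec]
  have hc : v ⬝ᵥ w ≠ 0 := fun h => hw0 (by rw [hwu, h, zero_smul])
  have huw : u = (v ⬝ᵥ w)⁻¹ • w := by
    conv_rhs => rw [hwu]
    rw [dotProduct_smul, smul_smul]
    have h : (v ⬝ᵥ w) = (v ⬝ᵥ w) * (v ⬝ᵥ u) := by
      conv_lhs => rw [hwu, dotProduct_smul, smul_eq_mul]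
    rw [smul_eq_mul, ← h, inv_mul_cancel₀ hc, one_smul]
  rw [huw]
  exact ⟨by rw [mulVec_smul, hw, smul_comm], by
    rw [dotProduct_smul, smul_eq_mul, inv_mul_cancel₀ hc]⟩

/-- Hellmann–Feynman: a simple eigenvalue branch of a C¹
symmetric family is differentiable, with gradient `(⟨v, ∂ₓA v⟩, ⟨v, ∂_y A v⟩)`. -/
theorem stmt10 {n : ℕ} (hn : 0 < n)
    (A : ℝ × ℝ → Matrix (Fin n) (Fin n) ℝ)
    (hA : ∀ i j, ContDiff ℝ 1 fun r => A r i j)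
    (hAsym : ∀ r, (A r)ᵀ = A r)
    (r₀ : ℝ × ℝ) (lam : ℝ × ℝ → ℝ)
    (hcont : ContinuousAt lam r₀)
    (heval : ∀ᶠ r in nhds r₀, ∃ w : Fin n → ℝ, w ≠ 0 ∧ (A r).mulVec w = lam r • w)
    (v : Fin n → ℝ)
    (hv : (A r₀).mulVec v = lam r₀ • v) (hvn : v ⬝ᵥ v = 1)
    (hsimple : ∀ w : Fin n → ℝ, (A r₀).mulVec w = lam r₀ • w → ∃ c : ℝ, w = c • v) :
    DifferentiableAt ℝ lam r₀ ∧
    pdx lam r₀ = v ⬝ᵥ (Matrix.of fun i j => pdx (fun r => A r i j) r₀).mulVec v ∧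
    pdy lam r₀ = v ⬝ᵥ (Matrix.of fun i j => pdy (fun r => A r i j) r₀).mulVec v := by
  have hAcont : ContinuousAt A r₀ :=
    continuousAt_pi.2 fun i => continuousAt_pi.2 fun j => (hA i j).continuous.continuousAt
  set T : ℝ × ℝ → Matrix (Fin n) (Fin n) ℝ := fun r => A r - lam r • 1 + vecMulVec v v with hT
  set u : ℝ × ℝ → Fin n → ℝ := fun r => (T r)⁻¹ *ᵥ v
  have hTcont : ContinuousAt T r₀ :=
    (hAcont.sub (hcont.smul continuousAt_const)).add continuousAt_const
  have hdet₀ : (T r₀).det ≠ 0 :=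
    Matrix.det_sub_smul_one_add_vecMulVec_ne_zero (hAsym r₀) hv hvn hsimple
  have hdetcont : ContinuousAt (fun r => (T r).det) r₀ :=
    (continuous_id.matrix_det).continuousAt.comp hTcont
  have hinv : ContinuousAt (fun r => (T r)⁻¹) r₀ := by
    simp only [Matrix.inv_def, Ring.inverse_eq_inv']
    exact (hdetcont.inv₀ hdet₀).smul ((continuous_id.matrix_adjugate).continuousAt.comp hTcont)
  have hucont : ContinuousAt u r₀ :=
    ContinuousAt.comp (f := fun r => (T r)⁻¹) (g := fun M : Matrix (Fin n) (Fin n) ℝ => M *ᵥ v)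
      (continuous_id.matrix_mulVec continuous_const).continuousAt hinv
  have hu₀ : u r₀ = v := by
    have hTv : T r₀ *ᵥ v = v := by
      simp [hT, add_mulVec, sub_mulVec, smul_mulVec, vecMulVec_mulVec, hv, hvn]
    calc u r₀ = (T r₀)⁻¹ *ᵥ (T r₀ *ᵥ v) := by rw [hTv]
      _ = v := by rw [mulVec_mulVec, nonsing_inv_mul _ hdet₀.isUnit, one_mulVec]
  have hlam : lam =ᶠ[nhds r₀]
      fun r => lam r₀ + ∑ i, ∑ j, v i * ((A r i j - A r₀ i j) * u r j) := by
    filter_upwards [heval, hdetcont.eventually_ne hdet₀] with r ⟨w, hw0, hw⟩ hdet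
    obtain ⟨hAu, hvu⟩ := Matrix.inv_mulVec_eigenvector hdet hw0 hw
    change A r *ᵥ u r = lam r • u r at hAu
    change v ⬝ᵥ u r = 1 at hvu
    have h₀ : v ⬝ᵥ A r₀ *ᵥ u r = lam r₀ := by
      rw [dotProduct_mulVec, ← mulVec_transpose, hAsym, hv, smul_dotProduct, hvu, smul_eq_mul,
        mul_one]
    have h₁ : v ⬝ᵥ A r *ᵥ u r = lam r := by
      rw [hAu, dotProduct_smul, hvu, smul_eq_mul, mul_one]
    have h₂ : v ⬝ᵥ (A r - A r₀) *ᵥ u r = lam r - lam r₀ := by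
      rw [sub_mulVec, dotProduct_sub, h₀, h₁]
    simp only [dotProduct, mulVec, Finset.mul_sum, Matrix.sub_apply] at h₂
    rw [h₂, add_sub_cancel]
  have hderiv : HasFDerivAt lam
      (∑ i, ∑ j, v i • (v j • fderiv ℝ (fun r => A r i j) r₀)) r₀ := by
    refine HasFDerivAt.congr_of_eventuallyEq ?_ hlam
    refine (HasFDerivAt.fun_sum fun i _ => HasFDerivAt.fun_sum fun j _ => ?_).const_add _
    refine HasFDerivAt.const_mul ?_ (v i)
    have hg := (((hA i j).differentiable one_ne_zero r₀).hasFDerivAt).sub_const (A r₀ i j)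
    simpa only [hu₀] using
      hg.mul_continuousAt_of_eq_zero (sub_self _) (continuousAt_pi.1 hucont j)
  refine ⟨hderiv.differentiableAt, ?_, ?_⟩ <;>
  · simp only [pdx, pdy, hderiv.fderiv, dotProduct, mulVec, Finset.mul_sum, of_apply,
      _root_.sum_apply, _root_.smul_apply, smul_eq_mul]
    exact Finset.sum_congr rfl fun i _ => Finset.sum_congr rfl fun j _ => by ring
end
end
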